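/- arXiv:1612.09385 — 6 statements merged into one kernel-verified Lean document; each statement's English description precedes it below -/
import Mathlib

section
/- For n ≥ 1, x > 0, and 0 ≤ β < 1, setting y = nx and p = 1/(1-β), the second Jain moment satisfies ∑_{k=0}^∞ (k/n)²·L_{n,k}^{(β)}(x) = (y·p²/n²)·(y + p). -/
noncomputable def jainL (n : ℕ) (β x : ℝ) (k : ℕ) : ℝ :=
  n * x * ((n * x + k * β) ^ (k : ℕ) / (n * x + k * β)) / (Nat.factorial k) *
    Real.exp (-(n * x + k * β))

noncomputable def jf (β : ℝ) (k : ℕ) (y : ℝ) : ℝ :=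
  (y + k * β) ^ k / (Nat.factorial k) * Real.exp (-(y + k * β))

noncomputable def jq (β : ℝ) : ℝ := Real.exp ((1 - β) * β) / (2 - β)

lemma jq_pos {β : ℝ} (h1 : β < 1) : 0 < jq β := by
  unfold jq
  have : 0 < 2 - β := by linarith
  positivity

lemma exp_lt_aux {β : ℝ} (h0 : 0 ≤ β) (h1 : β < 1) : Real.exp ((1 - β) * β) < 2 - β := by
  have h := Real.add_one_le_exp (-((1 - β) * β))
  have hpos : 0 < 1 - (1 - β) * β := by nlinarith
  have hE := Real.exp_pos ((1 - β) * β)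
  have hm : Real.exp ((1 - β) * β) * Real.exp (-((1 - β) * β)) = 1 := by
    rw [← Real.exp_add]; simp
  have h2 : Real.exp ((1 - β) * β) * (1 - (1 - β) * β) ≤ 1 := by
    refine le_trans (mul_le_mul_of_nonneg_left ?_ hE.le) hm.le; linarith
  have h3 : 1 < (2 - β) * (1 - (1 - β) * β) := by
    have : (2 - β) * (1 - (1 - β) * β) - 1 = (1 - β) ^ 3 := by ring
    have : 0 < (1 - β) ^ 3 := pow_pos (by linarith) 3
    linarith
  by_contra hc
  push Not at hc
  have := mul_le_mul_of_nonneg_right hc hpos.le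
  linarith

lemma jq_lt {β : ℝ} (h0 : 0 ≤ β) (h1 : β < 1) : jq β < 1 := by
  unfold jq
  rw [div_lt_one (by linarith)]
  exact exp_lt_aux h0 h1

lemma jf_bound {β : ℝ} (h0 : 0 ≤ β) (h1 : β < 1) (k : ℕ) {y : ℝ} (hy : -1 ≤ y) :
    |jf β k y| ≤ Real.exp 4 * Real.exp ((1 - β) * y) * jq β ^ k := by
  have hρ : 0 < 2 - β := by linarith
  unfold jf jq
  set l : ℝ := y + k * β with hl
  have hl1 : -1 ≤ l := by
    have : 0 ≤ (k : ℝ) * β := by positivity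
    linarith
  rw [abs_mul, abs_div, abs_pow, Real.abs_exp, Nat.abs_cast]
  have h2 := Real.pow_div_factorial_le_exp ((2 - β) * |l|) (by positivity) k
  have h3 : |l| ^ k / (Nat.factorial k) ≤ Real.exp ((2 - β) * |l|) / (2 - β) ^ k := by
    rw [le_div_iff₀ (by positivity)]
    calc _ = ((2 - β) * |l|) ^ k / (Nat.factorial k) := by rw [mul_pow]; ring
      _ ≤ _ := h2
  have h4 : (2 - β) * |l| - l ≤ 4 + (1 - β) * l := by
    rcases abs_cases l with ⟨h, _⟩ | ⟨h, _⟩ <;> rw [h] <;> nlinarith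
  calc _ ≤ Real.exp ((2 - β) * |l|) / (2 - β) ^ k * Real.exp (-l) := by gcongr
    _ = Real.exp ((2 - β) * |l| - l) / (2 - β) ^ k := by
        rw [sub_eq_add_neg ((2 - β) * |l|), Real.exp_add]; ring
    _ ≤ Real.exp (4 + (1 - β) * l) / (2 - β) ^ k := by gcongr
    _ = _ := by
        rw [div_pow, ← Real.exp_nat_mul, hl, ← Real.exp_add, mul_div_assoc', ← Real.exp_add]
        congr 2; ring

lemma jf_deriv (β : ℝ) (k : ℕ) (y : ℝ) :
    HasDerivAt (jf β (k+1)) (jf β k (y + β) - jf β (k+1) y) y := by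
  unfold jf
  have h1 : HasDerivAt (fun y : ℝ => y + ((k+1 : ℕ) : ℝ) * β) 1 y :=
    (hasDerivAt_id y).add_const _
  have h := ((h1.pow (k+1)).div_const ((Nat.factorial (k+1) : ℕ) : ℝ)).mul h1.neg.exp
  refine h.congr_deriv ?_
  have e : y + β + (k:ℝ) * β = y + ((k+1 : ℕ) : ℝ) * β := by push_cast; ring
  rw [e]
  simp only [Nat.factorial_succ, Nat.add_sub_cancel, Pi.pow_apply, Pi.neg_apply]
  push_cast
  have : (k : ℝ) + 1 ≠ 0 := by positivity
  have : (Nat.factorial k : ℝ) ≠ 0 := by positivity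
  field_simp
  try ring

lemma jf_deriv0 (β : ℝ) (y : ℝ) : HasDerivAt (jf β 0) (- jf β 0 y) y := by
  unfold jf
  simp only [Nat.cast_zero, zero_mul, add_zero, pow_zero, Nat.factorial_zero, Nat.cast_one,
    div_one, one_mul]
  simpa using (hasDerivAt_neg y).exp

lemma jf_summable {β : ℝ} (h0 : 0 ≤ β) (h1 : β < 1) {w : ℕ → ℝ} (hw0 : ∀ k, 0 ≤ w k)
    (hw : Summable fun k => w k * jq β ^ k) {y : ℝ} (hy : -1 ≤ y) :
    Summable fun k => w k * jf β k y := by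
  refine Summable.of_norm_bounded (hw.mul_left (Real.exp 4 * Real.exp ((1 - β) * y))) ?_
  intro k
  rw [Real.norm_eq_abs, abs_mul, abs_of_nonneg (hw0 k)]
  calc _ ≤ w k * (Real.exp 4 * Real.exp ((1 - β) * y) * jq β ^ k) := by
        gcongr
        · exact hw0 k
        · exact jf_bound h0 h1 k hy
    _ = _ := by ring

lemma jF_bound {β : ℝ} (h0 : 0 ≤ β) (h1 : β < 1) {w : ℕ → ℝ} (hw0 : ∀ k, 0 ≤ w k)
    (hw : Summable fun k => w k * jq β ^ k) {y : ℝ} (hy : -1 ≤ y) :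
    |∑' k, w k * jf β k y| ≤
      (Real.exp 4 * ∑' k, w k * jq β ^ k) * Real.exp ((1 - β) * y) := by
  have := tsum_of_norm_bounded (hw.hasSum.mul_left (Real.exp 4 * Real.exp ((1 - β) * y)))
    (f := fun k => w k * jf β k y) ?_
  · rw [Real.norm_eq_abs] at this
    refine this.trans (le_of_eq ?_)
    ring
  intro k
  rw [Real.norm_eq_abs, abs_mul, abs_of_nonneg (hw0 k)]
  calc _ ≤ w k * (Real.exp 4 * Real.exp ((1 - β) * y) * jq β ^ k) := by
        gcongr
        · exact hw0 k
        · exact jf_bound h0 h1 k hy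
    _ = _ := by ring

noncomputable def jd (β : ℝ) (k : ℕ) (y : ℝ) : ℝ :=
  match k with
  | 0 => - jf β 0 y
  | k+1 => jf β k (y + β) - jf β (k+1) y

lemma jd_deriv (β : ℝ) (k : ℕ) (y : ℝ) : HasDerivAt (jf β k) (jd β k y) y := by
  cases k with
  | zero => exact jf_deriv0 β y
  | succ k => exact jf_deriv β k y

lemma jd_bound {β : ℝ} (h0 : 0 ≤ β) (h1 : β < 1) (k : ℕ) {y : ℝ} (hy : -1 ≤ y) :
    |jd β k y| ≤ (3 - β) * (Real.exp 4 * Real.exp ((1 - β) * y)) * jq β ^ k := by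
  have hq := jq_pos h1
  cases k with
  | zero =>
    have := jf_bound h0 h1 0 hy
    simp only [jd, abs_neg]
    have hp : 0 < Real.exp 4 * Real.exp ((1 - β) * y) * jq β ^ 0 := by positivity
    nlinarith
  | succ k =>
    have a := jf_bound h0 h1 (k+1) hy
    have b := jf_bound h0 h1 k (y := y + β) (by linarith)
    simp only [jd]
    have e : Real.exp ((1 - β) * (y + β)) = Real.exp ((1 - β) * y) * ((2 - β) * jq β) := by
      unfold jq
      rw [mul_add, Real.exp_add, mul_div_cancel₀ _ (by linarith : (2 - β) ≠ 0)]
    rw [e] at b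
    calc _ ≤ _ := abs_sub _ _
      _ ≤ _ := add_le_add b a
      _ = _ := by ring

lemma jF_deriv {β : ℝ} (h0 : 0 ≤ β) (h1 : β < 1) {w : ℕ → ℝ} (hw0 : ∀ k, 0 ≤ w k)
    (hw : Summable fun k => w k * jq β ^ k) {y : ℝ} (hy : -1 < y) :
    HasDerivAt (fun y => ∑' k, w k * jf β k y)
      ((∑' k, w (k+1) * jf β k (y + β)) - ∑' k, w k * jf β k y) y := by
  have key := hasDerivAt_tsum_of_isPreconnected (t := Set.Ioo (-1) (y+1)) (y₀ := y) (y := y)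
    (g := fun k y => w k * jf β k y) (g' := fun k y => w k * jd β k y)
    (hw.mul_left ((3 - β) * (Real.exp 4 * Real.exp ((1 - β) * (y + 1))))) isOpen_Ioo
    isPreconnected_Ioo (fun k z _ => (jd_deriv β k z).const_mul _) ?_ ⟨hy, by linarith⟩
    (jf_summable h0 h1 hw0 hw hy.le) ⟨hy, by linarith⟩
  · refine key.congr_deriv ?_
    have hw1 : Summable fun k => w (k+1) * jq β ^ k := by
      have := ((summable_nat_add_iff 1).2 hw).mul_right (jq β)⁻¹
      refine this.congr ?_
      intro k
      have := (jq_pos h1).ne'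
      rw [pow_succ]; field_simp
    have s1 := jf_summable h0 h1 (fun k => hw0 (k+1)) hw1 (y := y + β) (by linarith)
    have s2 := jf_summable h0 h1 hw0 hw hy.le
    have s2' := (summable_nat_add_iff 1).2 s2
    have hs : Summable fun k => w (k+1) * jd β (k+1) y := by
      refine (s1.sub s2').congr ?_
      intro k; simp only [jd]; ring
    rw [((summable_nat_add_iff (f := fun k => w k * jd β k y) 1).1 hs).tsum_eq_zero_add,
      s2.tsum_eq_zero_add]
    have : ∑' k, w (k+1) * jd β (k+1) y =
        ∑' k, w (k+1) * jf β k (y+β) - ∑' k, w (k+1) * jf β (k+1) y := by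
      rw [← s1.tsum_sub s2']
      congr 1; ext k; simp only [jd]; ring
    rw [this]; simp only [jd]; ring
  · intro k z hz
    rw [Real.norm_eq_abs, abs_mul, abs_of_nonneg (hw0 k)]
    have := jq_pos h1
    have h3 : 0 ≤ 3 - β := by linarith
    calc _ ≤ w k * ((3 - β) * (Real.exp 4 * Real.exp ((1 - β) * z)) * jq β ^ k) :=
          mul_le_mul_of_nonneg_left (jd_bound h0 h1 k hz.1.le) (hw0 k)
      _ ≤ w k * ((3 - β) * (Real.exp 4 * Real.exp ((1 - β) * (y + 1))) * jq β ^ k) := by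
          have h5 : (1 - β) * z ≤ (1 - β) * (y + 1) :=
            mul_le_mul_of_nonneg_left hz.2.le (by linarith)
          have := hw0 k
          gcongr
      _ = _ := by ring

lemma const_of_delay {β : ℝ} (h0 : 0 ≤ β) (h1 : β < 1) (u : ℝ → ℝ) (M : ℝ)
    (hd : ∀ y, 0 ≤ y → HasDerivAt u (u (y + β) - u y) y)
    (hM : ∀ y, 0 ≤ y → |u y| ≤ M * Real.exp ((1 - β) * y)) :
    ∀ y, 0 ≤ y → u y = u 0 := by
  set E := Real.exp ((1 - β) * β) with hE
  have hEpos : 0 < E := Real.exp_pos _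
  have hr : β * E < 1 := by
    have := exp_lt_aux h0 h1
    have : β * E ≤ β * (2 - β) := mul_le_mul_of_nonneg_left this.le h0
    nlinarith [pow_pos (sub_pos.2 h1) 2]
  have hM0 : 0 ≤ M := by
    have := (abs_nonneg _).trans (hM 0 le_rfl); simpa using this
  have hE1 : ∀ y, Real.exp ((1 - β) * (y + β)) = Real.exp ((1 - β) * y) * E := by
    intro y; rw [mul_add, Real.exp_add]
  have hn : ∀ n : ℕ, ∀ y, 0 ≤ y →
      |u (y + β) - u y| ≤ (M * (E + 1)) * (β * E) ^ n * Real.exp ((1 - β) * y) := by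
    intro n
    induction n with
    | zero =>
      intro y hy
      have a := hM y hy
      have b := hM (y + β) (by linarith)
      rw [hE1] at b
      calc _ ≤ _ := abs_sub _ _
        _ ≤ _ := add_le_add b a
        _ = _ := by ring
    | succ n ih =>
      intro y hy
      have := Convex.norm_image_sub_le_of_norm_hasDerivWithin_le (f := u)
        (f' := fun z => u (z + β) - u z) (s := Set.Icc y (y + β)) (x := y) (y := y + β)
        (C := (M * (E + 1)) * (β * E) ^ n * Real.exp ((1 - β) * (y + β)))
        (fun z hz => (hd z (hy.trans hz.1)).hasDerivWithinAt) ?_ (convex_Icc _ _)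
        ⟨le_rfl, by linarith⟩ ⟨by linarith, le_rfl⟩
      · rw [Real.norm_eq_abs, hE1] at this
        refine this.trans (le_of_eq ?_)
        rw [add_sub_cancel_left, Real.norm_eq_abs, abs_of_nonneg h0]
        ring
      · intro z hz
        refine (ih z (hy.trans hz.1)).trans ?_
        have : (1 - β) * z ≤ (1 - β) * (y + β) :=
          mul_le_mul_of_nonneg_left hz.2 (by linarith)
        gcongr
  have hz : ∀ y, 0 ≤ y → u (y + β) - u y = 0 := by
    intro y hy
    have ht : Filter.Tendsto (fun n : ℕ =>
        (M * (E + 1)) * (β * E) ^ n * Real.exp ((1 - β) * y)) Filter.atTop (nhds 0) := by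
      have := ((tendsto_pow_atTop_nhds_zero_of_lt_one (by positivity) hr).const_mul
        (M * (E + 1))).mul_const (Real.exp ((1 - β) * y))
      simpa using this
    have := ge_of_tendsto' ht (fun n => hn n y hy)
    exact abs_eq_zero.1 (le_antisymm this (abs_nonneg _))
  intro y hy
  have := Convex.norm_image_sub_le_of_norm_hasDerivWithin_le (f := u)
        (f' := fun z => u (z + β) - u z) (s := Set.Icc 0 y) (x := 0) (y := y) (C := 0)
        (fun z hz => (hd z hz.1).hasDerivWithinAt) (fun z hs => by simp [hz z hs.1])
        (convex_Icc _ _) ⟨le_rfl, hy⟩ ⟨hy, le_rfl⟩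
  rw [zero_mul] at this
  exact sub_eq_zero.1 (norm_eq_zero.1 (le_antisymm this (norm_nonneg _)))

lemma jf_zero (β : ℝ) (k : ℕ) : jf β (k+1) 0 = β * jf β k β := by
  unfold jf
  have e : β + (k:ℝ) * β = ((k:ℝ) + 1) * β := by ring
  rw [e]
  simp only [Nat.factorial_succ]
  push_cast
  rw [zero_add, pow_succ]
  have : (k : ℝ) + 1 ≠ 0 := by positivity
  have : (Nat.factorial k : ℝ) ≠ 0 := by positivity
  field_simp

lemma jw0 {β : ℝ} (h0 : 0 ≤ β) (h1 : β < 1) : Summable fun k : ℕ => (1:ℝ) * jq β ^ k := by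
  simpa using summable_geometric_of_lt_one (jq_pos h1).le (jq_lt h0 h1)

lemma jw1 {β : ℝ} (h0 : 0 ≤ β) (h1 : β < 1) : Summable fun k : ℕ => (k:ℝ) * jq β ^ k := by
  have := summable_pow_mul_geometric_of_norm_lt_one (r := jq β) 1
    (by rw [Real.norm_eq_abs, abs_of_pos (jq_pos h1)]; exact jq_lt h0 h1)
  simpa using this

lemma jG {β : ℝ} (h0 : 0 ≤ β) (h1 : β < 1) {y : ℝ} (hy : 0 ≤ y) :
    ∑' k, jf β k y = 1 / (1 - β) := by
  have s := fun y (hy : (0:ℝ) ≤ y) => jf_summable h0 h1 (w := fun _ => 1) (fun _ => zero_le_one)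
    (jw0 h0 h1) (y := y) (by linarith)
  have c := const_of_delay h0 h1 (fun y => ∑' k, 1 * jf β k y) _
    (fun y hy => jF_deriv h0 h1 (w := fun _ => 1) (fun _ => zero_le_one) (jw0 h0 h1)
      (by linarith))
    (fun y hy => jF_bound h0 h1 (w := fun _ => 1) (fun _ => zero_le_one) (jw0 h0 h1)
      (by linarith))
  simp only [one_mul] at c s
  rw [c y hy]
  have e := (s 0 le_rfl).tsum_eq_zero_add
  simp only [jf_zero] at e
  rw [tsum_mul_left, c β h0] at e
  have e0 : jf β 0 0 = 1 := by simp [jf]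
  rw [e0] at e
  rw [eq_div_iff (by linarith)]
  linarith

lemma jH {β : ℝ} (h0 : 0 ≤ β) (h1 : β < 1) {y : ℝ} (hy : 0 ≤ y) :
    ∑' k : ℕ, (k:ℝ) * jf β k y = (1 / (1 - β)) ^ 2 * y + β * (1 / (1 - β)) ^ 3 := by
  set p := 1 / (1 - β) with hp
  have hpb : p * (1 - β) = 1 := by rw [hp]; field_simp [(by linarith : 1 - β ≠ 0)]
  have hp0 : 0 < p := by rw [hp]; exact one_div_pos.2 (by linarith)
  have hn : ∀ k : ℕ, (0:ℝ) ≤ k := fun k => Nat.cast_nonneg k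
  have s := fun y (hy : (0:ℝ) ≤ y) => jf_summable h0 h1 hn (jw1 h0 h1) (y := y) (by linarith)
  have sG := fun y (hy : (0:ℝ) ≤ y) => jf_summable h0 h1 (w := fun _ => 1)
    (fun _ => zero_le_one) (jw0 h0 h1) (y := y) (by linarith)
  simp only [one_mul] at sG
  have hshift : ∀ y, 0 ≤ y → ∑' k : ℕ, ((k+1 : ℕ) : ℝ) * jf β k y =
      ∑' k : ℕ, (k:ℝ) * jf β k y + p := by
    intro y hy
    rw [hp, ← jG h0 h1 hy, ← (s y hy).tsum_add (sG y hy)]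
    congr 1; ext k; push_cast; ring
  have c := const_of_delay h0 h1 (fun y => (∑' k : ℕ, (k:ℝ) * jf β k y) - p ^ 2 * y)
    ((Real.exp 4 * ∑' k : ℕ, (k:ℝ) * jq β ^ k) + p ^ 3) ?_ ?_
  · have cy := c y hy
    have cb := c β h0
    simp only [mul_zero, sub_zero] at cy cb
    have e := (s 0 le_rfl).tsum_eq_zero_add
    simp only [jf_zero] at e
    have e2 : ∑' k : ℕ, ((k+1 : ℕ) : ℝ) * (β * jf β k β) =
        β * ∑' k : ℕ, ((k+1 : ℕ) : ℝ) * jf β k β := by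
      rw [← tsum_mul_left]; congr 1; ext k; ring
    rw [e2, hshift β h0] at e
    simp only [Nat.cast_zero, zero_mul, zero_add] at e
    set A := ∑' k : ℕ, (k:ℝ) * jf β k 0
    have eA : A * (1 - β) = β * (p ^ 2 * β + p) := by
      linear_combination e + β * cb
    have : A = β * p ^ 3 := by
      linear_combination p * eA - A * hpb - β * p ^ 2 * hpb
    linear_combination cy + this
  · intro y hy
    have d := (jF_deriv h0 h1 hn (jw1 h0 h1) (y := y) (by linarith)).sub
      ((hasDerivAt_id y).const_mul (p ^ 2))
    rw [hshift (y + β) (by linarith)] at d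
    refine d.congr_deriv ?_
    linear_combination (-p) * hpb
  · intro y hy
    have b := jF_bound h0 h1 hn (jw1 h0 h1) (y := y) (by linarith)
    have b2 : |p ^ 2 * y| ≤ p ^ 3 * Real.exp ((1 - β) * y) := by
      rw [abs_of_nonneg (by positivity)]
      have := Real.add_one_le_exp ((1 - β) * y)
      calc p ^ 2 * y = p ^ 3 * ((1 - β) * y) := by linear_combination (- p ^ 2 * y) * hpb
        _ ≤ _ := by gcongr; linarith
    calc _ ≤ _ := abs_sub _ _
      _ ≤ _ := add_le_add b b2
      _ = _ := by ring

theorem jain_second_moment (n : ℕ) (hn : 1 ≤ n) (x β : ℝ)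
    (hx : 0 < x) (hβ0 : 0 ≤ β) (hβ1 : β < 1)
    (y p : ℝ) (hy : y = n * x) (hp : p = 1 / (1 - β)) :
    HasSum (fun k : ℕ => (k / n : ℝ) ^ 2 * jainL n β x k)
      (y * p ^ 2 / (n : ℝ) ^ 2 * (y + p)) := by
  have hn0 : (0:ℝ) < n := by exact_mod_cast hn
  have hy0 : 0 < y := by rw [hy]; positivity
  have hpb : p * (1 - β) = 1 := by rw [hp]; field_simp [(by linarith : 1 - β ≠ 0)]
  have hz : 0 ≤ y + β := by linarith
  have s := jf_summable hβ0 hβ1 (fun k : ℕ => Nat.cast_nonneg k) (jw1 hβ0 hβ1) (y := y + β)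
    (by linarith)
  have sG := jf_summable hβ0 hβ1 (w := fun _ => 1)
    (fun _ => zero_le_one) (jw0 hβ0 hβ1) (y := y + β) (by linarith)
  simp only [one_mul] at sG
  have h := (s.hasSum.add sG.hasSum).mul_left (y / (n:ℝ) ^ 2)
  rw [jG hβ0 hβ1 hz, jH hβ0 hβ1 hz, ← hp] at h
  rw [← hasSum_nat_add_iff' 1]
  have hf : (fun k : ℕ => (((k + 1 : ℕ) : ℝ) / n) ^ 2 * jainL n β x (k+1)) =
      fun k : ℕ => y / (n:ℝ) ^ 2 * ((k:ℝ) * jf β k (y + β) + jf β k (y + β)) := by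
    ext k
    unfold jainL jf
    rw [← hy]
    have e : y + β + (k:ℝ) * β = y + ((k+1 : ℕ) : ℝ) * β := by push_cast; ring
    rw [e]
    have hl : 0 < y + ((k+1 : ℕ) : ℝ) * β := by positivity
    rw [pow_succ (y + ((k+1 : ℕ) : ℝ) * β), mul_div_cancel_right₀ _ hl.ne', Nat.factorial_succ]
    have : (k : ℝ) + 1 ≠ 0 := by positivity
    have : (Nat.factorial k : ℝ) ≠ 0 := by positivity
    push_cast
    field_simp
  rw [hf]
  have hz0 : ((0:ℕ) / n : ℝ) ^ 2 * jainL n β x 0 = 0 := by simp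
  rw [Finset.sum_range_one, hz0, sub_zero]
  have hv : y * p ^ 2 / (n:ℝ) ^ 2 * (y + p) =
      y / (n:ℝ) ^ 2 * (p ^ 2 * (y + β) + β * p ^ 3 + p) := by
    linear_combination (y / (n:ℝ) ^ 2) * (p ^ 2 + p) * hpb
  rw [hv]
  exact h
end

section
/- For n ≥ 1, x > 0, and 0 ≤ β < 1, setting y = nx and p = 1/(1-β), the third Jain moment satisfies ∑_{k=0}^∞ (k/n)³·L_{n,k}^{(β)}(x) = (y·p³/n³)·(y² + 3yp + (1 + 2β)p²). -/
open Filter Topology in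
lemma key_lemma (β : ℝ) (hβ0 : 0 ≤ β) (f s : ℕ → ℝ → ℝ) (σ q : ℝ → ℝ)
    (hf : ∀ k a, 0 < a → 0 ≤ f k a) (hs : ∀ k a, 0 < a → 0 ≤ s k a)
    (hf0 : ∀ a, 0 < a → f 0 a = 0)
    (hrec : ∀ k a, 0 < a → f (k+1) a = s k (a+β) + β * f k (a+β))
    (hσ : ∀ a, 0 < a → HasSum (fun k => s k a) (σ a))
    (hq : ∀ a, 0 < a → q a = σ (a+β) + β * q (a+β))
    (hq0 : ∀ a, 0 < a → 0 ≤ q a)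
    (hlim : ∀ a, 0 < a → Tendsto (fun n : ℕ => β ^ n * q (a + n * β)) atTop (𝓝 0)) :
    ∀ a, 0 < a → HasSum (fun k => f k a) (q a) := by
  have hb : ∀ N a, 0 < a → ∑ k ∈ Finset.range N, f k a ≤ q a := by
    intro N
    induction N with
    | zero => intro a ha; simpa using hq0 a ha
    | succ N ih =>
      intro a ha
      have hab : 0 < a + β := by linarith
      rw [Finset.sum_range_succ', hf0 a ha, Finset.sum_congr rfl (fun k _ => hrec k a ha),
        Finset.sum_add_distrib, ← Finset.mul_sum, hq a ha]
      have h1 := sum_le_hasSum (Finset.range N) (fun k _ => hs k _ hab) (hσ _ hab)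
      have h2 := mul_le_mul_of_nonneg_left (ih _ hab) hβ0
      linarith
  have hsum : ∀ a, 0 < a → Summable (fun k => f k a) := fun a ha =>
    summable_of_sum_range_le (fun k => hf k a ha) (fun N => hb N a ha)
  have hle : ∀ a, 0 < a → ∑' k, f k a ≤ q a := fun a ha =>
    Real.tsum_le_of_sum_range_le (fun k => hf k a ha) (fun N => hb N a ha)
  have hnn : ∀ a, 0 < a → 0 ≤ ∑' k, f k a := fun a ha => tsum_nonneg (fun k => hf k a ha)
  have hr : ∀ a, 0 < a → ∑' k, f k a = σ (a+β) + β * ∑' k, f k (a+β) := by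
    intro a ha
    have hab : 0 < a + β := by linarith
    rw [(hsum a ha).tsum_eq_zero_add, hf0 a ha, zero_add]
    have := (hσ _ hab).add ((hsum _ hab).hasSum.mul_left β)
    rw [← this.tsum_eq]
    exact tsum_congr (fun k => hrec k a ha)
  have hit : ∀ n : ℕ, ∀ a, 0 < a →
      q a - ∑' k, f k a = β ^ n * (q (a + n * β) - ∑' k, f k (a + n * β)) := by
    intro n
    induction n with
    | zero => intro a ha; simp
    | succ n ih =>
      intro a ha
      have hab : 0 < a + β := by linarith
      have e : a + ((n+1 : ℕ) : ℝ) * β = a + β + n * β := by push_cast; ring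
      rw [e, pow_succ', mul_assoc, ← ih _ hab, hq a ha, hr a ha]; ring
  intro a ha
  have h0 : q a - ∑' k, f k a ≤ 0 := by
    refine ge_of_tendsto' (hlim a ha) (fun n => ?_)
    have hp : 0 < a + n * β := by positivity
    rw [hit n a ha]
    exact mul_le_mul_of_nonneg_left (by linarith [hnn _ hp]) (by positivity)
  have : q a = ∑' k, f k a := by linarith [hle a ha]
  rw [this]
  exact (hsum a ha).hasSum

noncomputable def WW (β : ℝ) : ℕ → ℝ → ℝ
  | 0, a => Real.exp (-a)
  | k+1, a => a * (a + (k+1) * β) ^ k / (Nat.factorial (k+1)) * Real.exp (-(a + (k+1) * β))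

lemma WW_nonneg (β : ℝ) (hβ0 : 0 ≤ β) (k : ℕ) (a : ℝ) (ha : 0 ≤ a) : 0 ≤ WW β k a := by
  cases k <;> simp only [WW] <;> positivity

lemma WW_deriv_zero (β a : ℝ) : HasDerivAt (WW β 0) (-WW β 0 a) a := by
  have := (hasDerivAt_id a).neg.exp
  have e : WW β 0 = fun a => Real.exp (-a) := by funext a; simp [WW]
  rw [e]
  simpa using this

lemma WW_deriv (β : ℝ) (k : ℕ) (a : ℝ) :
    HasDerivAt (WW β (k+1)) (WW β k (a+β) - WW β (k+1) a) a := by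
  have h1 : HasDerivAt (fun a : ℝ => a + (k+1) * β) 1 a := (hasDerivAt_id a).add_const _
  have h := ((((hasDerivAt_id a).mul (h1.pow k)).div_const (Nat.factorial (k+1) : ℝ)).mul
    (h1.neg.exp))
  refine HasDerivAt.congr_deriv (f := WW β (k+1)) h ?_
  cases k with
  | zero => simp [WW]; ring_nf
  | succ j =>
    have e : a + β + ((j:ℝ)+1) * β = a + ((j:ℝ)+1+1) * β := by ring
    have hj : ((j:ℝ)+1+1) ≠ 0 := by positivity
    have hj' : ((j:ℝ)+1) ≠ 0 := by positivity
    have hf : ((Nat.factorial j : ℕ) : ℝ) ≠ 0 := by positivity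
    simp only [WW, e, Nat.factorial_succ]
    push_cast
    simp only [id, Pi.pow_apply, Pi.mul_apply]
    generalize Real.exp _ = E
    field_simp
    ring

noncomputable def FF (β : ℝ) (N : ℕ) (a : ℝ) : ℝ := ∑ k ∈ Finset.range N, WW β k a

lemma FF_deriv (β : ℝ) (N : ℕ) (a : ℝ) :
    HasDerivAt (FF β (N+1)) (FF β N (a+β) - FF β (N+1) a) a := by
  induction N with
  | zero =>
    have e : FF β (0+1) = WW β 0 := by funext a; simp [FF]
    rw [e]
    simpa [FF] using WW_deriv_zero β a
  | succ N ih =>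
    have e : FF β (N+1+1) = fun a => FF β (N+1) a + WW β (N+1) a := by
      funext a; simp [FF, Finset.sum_range_succ]
    have e2 : FF β (N+1) (a+β) = FF β N (a+β) + WW β N (a+β) := by
      simp [FF, Finset.sum_range_succ]
    rw [e]
    refine (ih.add (WW_deriv β N a)).congr_deriv ?_
    rw [e2]; ring

lemma FF_cont (β : ℝ) (N : ℕ) : Continuous (FF β N) := by
  cases N with
  | zero => 
    have e : FF β 0 = fun _ => 0 := by funext a; simp [FF]
    rw [e]; exact continuous_const
  | succ N => exact continuous_iff_continuousAt.2 fun a => (FF_deriv β N a).continuousAt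

lemma FF_nonneg (β : ℝ) (hβ0 : 0 ≤ β) (N : ℕ) (a : ℝ) (ha : 0 ≤ a) : 0 ≤ FF β N a :=
  Finset.sum_nonneg fun k _ => WW_nonneg β hβ0 k a ha

lemma FF_anti (β : ℝ) (hβ0 : 0 ≤ β) (N : ℕ) : AntitoneOn (FF β N) (Set.Ici 0) := by
  induction N with
  | zero => intro a _ b _ _; simp [FF]
  | succ N ih =>
    refine antitoneOn_of_deriv_nonpos (convex_Ici 0) (FF_cont β _).continuousOn
      (fun a _ => (FF_deriv β N a).differentiableAt.differentiableWithinAt) ?_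
    intro a ha
    rw [interior_Ici] at ha
    have ha' : (0:ℝ) < a := ha
    rw [(FF_deriv β N a).deriv]
    have h1 : FF β N (a+β) ≤ FF β N a :=
      ih (Set.mem_Ici.2 ha'.le) (Set.mem_Ici.2 (by linarith)) (by linarith)
    have h2 : FF β (N+1) a = FF β N a + WW β N a := by
      simp [FF, Finset.sum_range_succ]
    linarith [WW_nonneg β hβ0 N a ha'.le]

lemma FF_zero (β : ℝ) (N : ℕ) : FF β (N+1) 0 = 1 := by
  simp [FF, Finset.sum_range_succ', WW]

lemma FF_le (β : ℝ) (hβ0 : 0 ≤ β) (N : ℕ) (a : ℝ) (ha : 0 ≤ a) : FF β N a ≤ 1 := by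
  cases N with
  | zero => simp [FF]
  | succ N => rw [← FF_zero β N]; exact FF_anti β hβ0 _ (Set.mem_Ici.2 le_rfl) ha ha

noncomputable def GG (β a : ℝ) : ℝ := ∑' k, WW β k a

lemma WW_summable (β : ℝ) (hβ0 : 0 ≤ β) (a : ℝ) (ha : 0 ≤ a) : Summable (fun k => WW β k a) :=
  summable_of_sum_range_le (fun k => WW_nonneg β hβ0 k a ha) (fun N => FF_le β hβ0 N a ha)

open Filter Topology in
lemma GG_tendsto (β : ℝ) (hβ0 : 0 ≤ β) (a : ℝ) (ha : 0 ≤ a) :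
    Tendsto (fun N => FF β N a) atTop (𝓝 (GG β a)) :=
  (WW_summable β hβ0 a ha).hasSum.tendsto_sum_nat

lemma GG_le (β : ℝ) (hβ0 : 0 ≤ β) (a : ℝ) (ha : 0 ≤ a) : GG β a ≤ 1 :=
  le_of_tendsto' (GG_tendsto β hβ0 a ha) fun N => FF_le β hβ0 N a ha

lemma GG_nonneg (β : ℝ) (hβ0 : 0 ≤ β) (a : ℝ) (ha : 0 ≤ a) : 0 ≤ GG β a :=
  ge_of_tendsto' (GG_tendsto β hβ0 a ha) fun N => FF_nonneg β hβ0 N a ha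

lemma GG_anti (β : ℝ) (hβ0 : 0 ≤ β) : AntitoneOn (GG β) (Set.Ici 0) := fun a ha b hb hab =>
  le_of_tendsto_of_tendsto' (GG_tendsto β hβ0 b hb) (GG_tendsto β hβ0 a ha)
    fun N => FF_anti β hβ0 N ha hb hab

lemma GG_int (β : ℝ) (hβ0 : 0 ≤ β) (a b : ℝ) (ha : 0 ≤ a) (hb : 0 ≤ b) :
    IntervalIntegrable (GG β) MeasureTheory.volume a b := by
  refine AntitoneOn.intervalIntegrable ((GG_anti β hβ0).mono ?_)
  intro t ht
  exact le_trans (le_min ha hb) ht.1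

open Filter Topology in
lemma GG_eq (β : ℝ) (hβ0 : 0 ≤ β) (A : ℝ) (hA : 0 ≤ A) :
    GG β A - 1 = ∫ t in (0:ℝ)..A, (GG β (t+β) - GG β t) := by
  have h1 : ∀ N, ∫ t in (0:ℝ)..A, (FF β N (t+β) - FF β (N+1) t) = FF β (N+1) A - 1 := by
    intro N
    rw [← FF_zero β N]
    refine intervalIntegral.integral_eq_sub_of_hasDerivAt (fun t _ => FF_deriv β N t) ?_
    exact (((FF_cont β N).comp (continuous_id.add continuous_const)).sub
      (FF_cont β (N+1))).intervalIntegrable _ _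
  have h2 : Tendsto (fun N => FF β (N+1) A - 1) atTop (𝓝 (GG β A - 1)) :=
    (((GG_tendsto β hβ0 A hA).comp (tendsto_add_atTop_nat 1))).sub_const 1
  have h3 : Tendsto (fun N => ∫ t in (0:ℝ)..A, (FF β N (t+β) - FF β (N+1) t)) atTop
      (𝓝 (∫ t in (0:ℝ)..A, (GG β (t+β) - GG β t))) := by
    refine intervalIntegral.tendsto_integral_filter_of_dominated_convergence (fun _ => 1)
      ?_ ?_ ?_ ?_
    · exact Eventually.of_forall fun N =>
        (((FF_cont β N).comp (continuous_id.add continuous_const)).sub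
          (FF_cont β (N+1))).aestronglyMeasurable
    · refine Eventually.of_forall fun N => Eventually.of_forall fun t ht => ?_
      rw [Set.uIoc_of_le hA] at ht
      have ht0 := ht.1.le
      have htb : 0 ≤ t + β := by linarith
      rw [Real.norm_eq_abs, abs_le]
      constructor
      · linarith [FF_nonneg β hβ0 N _ htb, FF_le β hβ0 (N+1) t ht0]
      · linarith [FF_le β hβ0 N _ htb, FF_nonneg β hβ0 (N+1) t ht0]
    · exact intervalIntegrable_const
    · refine Eventually.of_forall fun t ht => ?_
      rw [Set.uIoc_of_le hA] at ht
      have ht0 := ht.1.le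
      have htb : 0 ≤ t + β := by linarith
      exact (GG_tendsto β hβ0 _ htb).sub
        ((GG_tendsto β hβ0 t ht0).comp (tendsto_add_atTop_nat 1))
  simp only [h1] at h3
  exact tendsto_nhds_unique h2 h3

lemma GG_step (β : ℝ) (hβ0 : 0 ≤ β) (l : ℝ) (hl : ∀ a, 0 ≤ a → l ≤ GG β a)
    (A : ℝ) (hA : 0 ≤ A) : 1 - β + β * l ≤ GG β A := by
  have h := GG_eq β hβ0 A hA
  have hAb : 0 ≤ A + β := by linarith
  have i1 := GG_int β hβ0
  rw [intervalIntegral.integral_sub, intervalIntegral.integral_comp_add_right (GG β) β,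
    zero_add] at h
  · have e1 := intervalIntegral.integral_add_adjacent_intervals (i1 0 β le_rfl hβ0)
      (i1 β (A+β) hβ0 hAb)
    have e2 := intervalIntegral.integral_add_adjacent_intervals (i1 0 A le_rfl hA)
      (i1 A (A+β) hA hAb)
    have b1 : ∫ t in (0:ℝ)..β, GG β t ≤ ∫ t in (0:ℝ)..β, (1:ℝ) :=
      intervalIntegral.integral_mono_on hβ0 (i1 0 β le_rfl hβ0) intervalIntegrable_const
        (fun t ht => GG_le β hβ0 t ht.1)
    have b2 : ∫ t in A..(A+β), l ≤ ∫ t in A..(A+β), GG β t :=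
      intervalIntegral.integral_mono_on (by linarith) intervalIntegrable_const
        (i1 A (A+β) hA hAb) (fun t ht => hl t (hA.trans ht.1))
    simp only [intervalIntegral.integral_const, smul_eq_mul] at b1 b2
    linarith
  · have := (i1 (0+β) (A+β) (by linarith) hAb).comp_add_right β
    simpa using this
  · exact i1 0 A le_rfl hA

open Filter Topology in
lemma GG_one (β : ℝ) (hβ0 : 0 ≤ β) (hβ1 : β < 1) (a : ℝ) (ha : 0 ≤ a) : GG β a = 1 := by
  have h : ∀ n : ℕ, ∀ a, 0 ≤ a → 1 - β ^ n ≤ GG β a := by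
    intro n
    induction n with
    | zero => intro a ha; simpa using GG_nonneg β hβ0 a ha
    | succ n ih =>
      intro a ha
      have := GG_step β hβ0 _ ih a ha
      rw [pow_succ']; linarith
  refine le_antisymm (GG_le β hβ0 a ha) ?_
  have t : Tendsto (fun n : ℕ => 1 - β ^ n) atTop (𝓝 (1 - 0)) :=
    (tendsto_pow_atTop_nhds_zero_of_lt_one hβ0 hβ1).const_sub 1
  rw [sub_zero] at t
  exact le_of_tendsto' t fun n => h n a ha

lemma WW_hasSum (β : ℝ) (hβ0 : 0 ≤ β) (hβ1 : β < 1) (a : ℝ) (ha : 0 < a) :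
    HasSum (fun k => WW β k a) 1 := by
  rw [← GG_one β hβ0 hβ1 a ha.le]
  exact (WW_summable β hβ0 a ha.le).hasSum

lemma WW_rec (β : ℝ) (hβ0 : 0 ≤ β) (k : ℕ) (a : ℝ) (ha : 0 < a) :
    ((k:ℝ)+1) * (WW β (k+1) a / a) = WW β k (a+β) + β * (k * (WW β k (a+β) / (a+β))) := by
  have hab : a + β ≠ 0 := by positivity
  cases k with
  | zero => 
    simp [WW]; field_simp
  | succ j =>
    have e : a + β + ((j:ℝ)+1) * β = a + ((j:ℝ)+1+1) * β := by ring
    have hf : ((Nat.factorial j : ℕ) : ℝ) ≠ 0 := by positivity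
    simp only [WW, e, Nat.factorial_succ]
    push_cast
    generalize Real.exp _ = E
    field_simp
    ring

open Filter Topology in
lemma lim_quad (β : ℝ) (hβ0 : 0 ≤ β) (hβ1 : β < 1) (c d e a : ℝ) :
    Tendsto (fun n : ℕ => β ^ n * (c * (a + n * β) ^ 2 + d * (a + n * β) + e)) atTop (𝓝 0) := by
  have h : |β| < 1 := by rw [abs_of_nonneg hβ0]; exact hβ1
  have t0 := tendsto_pow_const_mul_const_pow_of_abs_lt_one 0 h
  have t1 := tendsto_pow_const_mul_const_pow_of_abs_lt_one 1 h
  have t2 := tendsto_pow_const_mul_const_pow_of_abs_lt_one 2 h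
  have := ((t2.const_mul (c * β^2)).add (t1.const_mul (2*c*a*β + d*β))).add
    (t0.const_mul (c*a^2 + d*a+e))
  simp only [mul_zero, add_zero] at this
  refine this.congr fun n => ?_
  ring

lemma WW_m1 (β p : ℝ) (hβ0 : 0 ≤ β) (hβ1 : β < 1) (hp0 : 0 < p) (hp : p = 1 + β * p) :
    ∀ a, 0 < a → HasSum (fun k : ℕ => (k:ℝ) * (WW β k a / a)) p := by
  refine key_lemma β hβ0 (fun k a => (k:ℝ) * (WW β k a / a)) (fun k a => WW β k a)
    (fun _ => 1) (fun _ => p) ?_ ?_ ?_ ?_ ?_ ?_ ?_ ?_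
  · intro k a ha; have := WW_nonneg β hβ0 k a ha.le; positivity
  · intro k a ha; exact WW_nonneg β hβ0 k a ha.le
  · intro a ha; simp
  · intro k a ha; push_cast; exact WW_rec β hβ0 k a ha
  · exact WW_hasSum β hβ0 hβ1
  · intro a ha; exact hp
  · intro a ha; exact hp0.le
  · intro a ha; simpa using lim_quad β hβ0 hβ1 0 0 p a

lemma WW_m2 (β p : ℝ) (hβ0 : 0 ≤ β) (hβ1 : β < 1) (hp0 : 0 < p) (hp : p = 1 + β * p) :
    ∀ a, 0 < a → HasSum (fun k : ℕ => (k:ℝ)^2 * (WW β k a / a)) (a * p^2 + p^3) := by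
  refine key_lemma β hβ0 (fun k a => (k:ℝ)^2 * (WW β k a / a))
    (fun k a => WW β k a + a * (k * (WW β k a / a)) + β * (k * (WW β k a / a)))
    (fun a => 1 + a * p + β * p) (fun a => a * p^2+p^3) ?_ ?_ ?_ ?_ ?_ ?_ ?_ ?_
  · intro k a ha; have := WW_nonneg β hβ0 k a ha.le; positivity
  · intro k a ha; have := WW_nonneg β hβ0 k a ha.le; positivity
  · intro a ha; simp
  · intro k a ha; push_cast
    have hab : a + β ≠ 0 := by positivity
    have e : ((k:ℝ)+1)^2 * (WW β (k+1) a / a) = (k+1) * (((k:ℝ)+1) * (WW β (k+1) a / a)) := by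
      ring
    rw [e, WW_rec β hβ0 k a ha]
    field_simp
    ring
  · intro a ha
    have m1 := WW_m1 β p hβ0 hβ1 hp0 hp a ha
    exact ((WW_hasSum β hβ0 hβ1 a ha).add (m1.mul_left a)).add (m1.mul_left β)
  · intro a ha
    have hb : β * p = p - 1 := by linarith
    have : (1 + (a+β) * p + β * p + β * ((a+β)*p^2+p^3)) = 1 + a * p + 2*(β * p) +
      (β * p) * (a * p + (β*p) + p^2) := by ring
    rw [this, hb]; ring
  · intro a ha; positivity
  · intro a ha
    refine (lim_quad β hβ0 hβ1 0 (p^2) (p^3) a).congr fun n => ?_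
    ring

lemma WW_m3 (β p : ℝ) (hβ0 : 0 ≤ β) (hβ1 : β < 1) (hp0 : 0 < p) (hp : p = 1 + β * p) :
    ∀ a, 0 < a → HasSum (fun k : ℕ => (k:ℝ)^3 * (WW β k a / a))
      (p^3 * (a^2 + 3 * a * p + (1 + 2 * β) * p^2)) := by
  refine key_lemma β hβ0 (fun k a => (k:ℝ)^3 * (WW β k a / a))
    (fun k a => WW β k a + (2 * a + β) * (k * (WW β k a / a)) +
      (a + 2 * β) * (k^2 * (WW β k a / a)))
    (fun a => 1 + (2 * a + β) * p + (a + 2 * β) * (a * p^2+p^3))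
    (fun a => p^3 * (a^2 + 3 * a * p + (1 + 2 * β) * p^2)) ?_ ?_ ?_ ?_ ?_ ?_ ?_ ?_
  · intro k a ha; have := WW_nonneg β hβ0 k a ha.le; positivity
  · intro k a ha; have := WW_nonneg β hβ0 k a ha.le; positivity
  · intro a ha; simp
  · intro k a ha; push_cast
    have hab : a + β ≠ 0 := by positivity
    have e : ((k:ℝ)+1)^3 * (WW β (k+1) a / a) = (k+1)^2 * (((k:ℝ)+1) * (WW β (k+1) a / a)) := by
      ring
    rw [e, WW_rec β hβ0 k a ha]
    field_simp
    ring
  · intro a ha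
    have m1 := WW_m1 β p hβ0 hβ1 hp0 hp a ha
    have m2 := WW_m2 β p hβ0 hβ1 hp0 hp a ha
    exact ((WW_hasSum β hβ0 hβ1 a ha).add (m1.mul_left _)).add (m2.mul_left _)
  · intro a ha
    have hb : β = (p - 1) / p := by field_simp; linarith
    simp only [hb]
    field_simp
    ring
  · intro a ha; positivity
  · intro a ha
    refine (lim_quad β hβ0 hβ1 (p^3) (3*p^4) ((1+2*β)*p^5) a).congr fun n => ?_
    ring

theorem jain_third_moment (n : ℕ) (hn : 1 ≤ n) (x β : ℝ)
    (hx : 0 < x) (hβ0 : 0 ≤ β) (hβ1 : β < 1)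
    (y p : ℝ) (hy : y = n * x) (hp : p = 1 / (1 - β)) :
    HasSum (fun k : ℕ => (k / n : ℝ) ^ 3 * jainL n β x k)
      (y * p ^ 3 / (n : ℝ) ^ 3 * (y ^ 2 + 3 * y * p + (1 + 2 * β) * p ^ 2)) := by
  have hn' : (0:ℝ) < n := by exact_mod_cast hn
  have hy0 : 0 < y := by rw [hy]; positivity
  have h1 : 0 < 1 - β := by linarith
  have hp0 : 0 < p := by rw [hp]; positivity
  have hpe : p = 1 + β * p := by rw [hp]; field_simp; ring
  have h := (WW_m3 β p hβ0 hβ1 hp0 hpe y hy0).mul_left (y / (n:ℝ)^3)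
  have e : ∀ k : ℕ, jainL n β x k = WW β k y := by
    intro k
    unfold jainL
    rw [← hy]
    cases k with
    | zero => simp [WW]; field_simp
    | succ k =>
      have : y + ((k:ℝ)+1) * β ≠ 0 := by positivity
      simp only [WW]
      push_cast
      rw [pow_succ, mul_div_cancel_right₀ _ this]
  have e1 : (fun k : ℕ => (k / n : ℝ) ^ 3 * jainL n β x k) =
      fun k : ℕ => y / (n:ℝ)^3 * ((k:ℝ)^3 * (WW β k y / y)) := by
    funext k
    rw [e]
    field_simp
  have e2 : y * p ^ 3 / (n : ℝ) ^ 3 * (y ^ 2 + 3 * y * p + (1 + 2 * β) * p ^ 2) =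
      y / (n:ℝ)^3 * (p^3 * (y^2 + 3 * y * p + (1 + 2 * β) * p^2)) := by ring
  rw [e1, e2]
  exact h
end

section
/- For n ≥ 1, x > 0, and 0 ≤ β < 1, setting y = nx and p = 1/(1-β), the fifth Jain moment satisfies ∑_{k=0}^∞ (k/n)⁵·L_{n,k}^{(β)}(x) = (y·p⁵/n⁵)·(y⁴ + 10y³p + 5(5+4β)y²p² + 15(1+4β+2β²)yp³ + (1 + 22β + 58β² + 24β³)p⁴). -/
lemma hs_cg {f g : ℕ → ℝ} {a c : ℝ} (h : HasSum f a) (hf : ∀ j, g j = f j) (ha : c = a) :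
    HasSum g c := by
  rw [ha, funext hf]; exact h

noncomputable def jA (b : ℝ) : ℕ → ℝ → ℝ
  | 0, y => Real.exp (-y)
  | (k+1), y => y * (y + (k+1) * b) ^ k / (Nat.factorial (k+1)) * Real.exp (-(y + (k+1) * b))

lemma jA_nonneg (b : ℝ) (hb : 0 ≤ b) (k : ℕ) (y : ℝ) (hy : 0 ≤ y) : 0 ≤ jA b k y := by
  cases k with
  | zero => simp only [jA]; positivity
  | succ k => simp only [jA]; positivity

lemma jA_rec (b : ℝ) (hb : 0 ≤ b) (j : ℕ) (y : ℝ) (hy : 0 < y) :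
    ((j:ℝ)+1) * jA b (j+1) y = y / (y+b) * ((y + b + j * b) * jA b j (y+b)) := by
  have h1 : y + b ≠ 0 := by positivity
  have hf := Nat.factorial_ne_zero j
  have hf' : ((Nat.factorial j : ℕ):ℝ) ≠ 0 := by exact_mod_cast hf
  cases j with
  | zero => simp [jA]; field_simp
  | succ k =>
    simp only [jA]
    rw [Nat.factorial_succ (k+1)]
    have e : y + b + ((k:ℝ)+1) * b = y + (((k+1:ℕ):ℝ)+1) * b := by push_cast; ring
    have e2 : y + b + (((k+1:ℕ):ℝ)) * b = y + (((k+1:ℕ):ℝ)+1) * b := by ring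
    rw [e, e2]
    generalize y + (((k+1:ℕ):ℝ)+1) * b = z
    have h2 : (((k+1:ℕ):ℝ)+1) ≠ 0 := by positivity
    push_cast at *
    field_simp
    ring

lemma jA_deriv (b : ℝ) (k : ℕ) (y : ℝ) :
    HasDerivAt (fun y => Real.exp y * jA b (k+1) y) (Real.exp y * jA b k (y+b)) y := by
  have hE : ∀ y : ℝ, Real.exp y * jA b (k+1) y =
      y * (y + (k+1) * b) ^ k * (Real.exp (-((k+1) * b)) / (Nat.factorial (k+1))) := by
    intro y
    simp only [jA]
    have : Real.exp (-((k+1) * b)) = Real.exp y * Real.exp (-(y + (k+1) * b)) := by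
      rw [← Real.exp_add]; congr 1; ring
    rw [this]; ring
  rw [funext hE]
  have h := (((hasDerivAt_id y).mul (((hasDerivAt_id y).add_const ((k+1) * b)).pow k))).mul_const
    (Real.exp (-((k+1) * b)) / (Nat.factorial (k+1)))
  refine h.congr_deriv ?_
  cases k with
  | zero =>
    simp [jA]
    rw [← Real.exp_add]; congr 1; ring
  | succ k =>
    simp only [jA, id]
    have e : y + b + ((k:ℝ)+1) * b = y + (((k+1:ℕ):ℝ)+1) * b := by push_cast; ring
    have : Real.exp (-((((k+1:ℕ):ℝ)+1) * b)) =
        Real.exp y * Real.exp (-(y + (((k+1:ℕ):ℝ)+1) * b)) := by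
      rw [← Real.exp_add]; congr 1; ring
    rw [this, e, Nat.factorial_succ (k+1)]
    have hf' : ((Nat.factorial (k+1) : ℕ):ℝ) ≠ 0 := by exact_mod_cast Nat.factorial_ne_zero _
    generalize Real.exp (-(y + (((k+1:ℕ):ℝ)+1) * b)) = E1
    generalize Real.exp y = E2
    simp only [Pi.pow_apply, Nat.add_sub_cancel, id]
    have h2 : ((k:ℝ)+1+1) ≠ 0 := by positivity
    push_cast
    field_simp
    ring

noncomputable def jF (b : ℝ) (K : ℕ) (y : ℝ) : ℝ := ∑ k ∈ Finset.range (K+1), jA b k y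

lemma jF_zero (b : ℝ) (K : ℕ) : jF b K 0 = 1 := by
  rw [jF, Finset.sum_range_succ']
  simp [jA]

lemma jF_deriv_s11 (b : ℝ) (K : ℕ) (y : ℝ) :
    HasDerivAt (fun y => Real.exp y * jF b (K+1) y) (Real.exp y * jF b K (y+b)) y := by
  have hE : ∀ y : ℝ, Real.exp y * jF b (K+1) y =
      (∑ k ∈ Finset.range (K+1), Real.exp y * jA b (k+1) y) + 1 := by
    intro y
    rw [jF, Finset.sum_range_succ', mul_add, Finset.mul_sum]
    simp [jA, ← Real.exp_add]
  rw [funext hE, jF, Finset.mul_sum]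
  exact (HasDerivAt.fun_sum (fun k _ => jA_deriv b k y)).add_const 1

lemma mono_aux (f g f' g' : ℝ → ℝ) (hf : ∀ y, HasDerivAt f (f' y) y)
    (hg : ∀ y, HasDerivAt g (g' y) y) (h : ∀ y, 0 ≤ y → f' y ≤ g' y) (h0 : f 0 ≤ g 0)
    (y : ℝ) (hy : 0 ≤ y) : f y ≤ g y := by
  have hd : ∀ y, HasDerivAt (fun y => g y - f y) (g' y - f' y) y := fun y => (hg y).sub (hf y)
  have : MonotoneOn (fun y => g y - f y) (Set.Ici 0) := by
    apply monotoneOn_of_deriv_nonneg (convex_Ici 0)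
    · exact fun y _ => (hd y).continuousAt.continuousWithinAt
    · exact fun y _ => (hd y).differentiableAt.differentiableWithinAt
    · intro y hy
      rw [interior_Ici] at hy
      rw [(hd y).deriv]
      linarith [h y (le_of_lt hy)]
  have := this (Set.mem_Ici.2 le_rfl) (Set.mem_Ici.2 hy) hy
  simp only at this
  linarith

lemma jF_le (b : ℝ) (hb : 0 ≤ b) (K : ℕ) : ∀ y : ℝ, 0 ≤ y → jF b K y ≤ 1 := by
  induction K with
  | zero => intro y hy; simp [jF, jA, hy]
  | succ K ih =>
    intro y hy
    have := mono_aux _ Real.exp _ Real.exp (jF_deriv_s11 b K) Real.hasDerivAt_exp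
      (fun y hy => by nlinarith [ih (y+b) (by positivity), Real.exp_pos y])
      (by simp [jF_zero]) y hy
    have h2 := Real.exp_pos y
    by_contra hc
    push Not at hc
    nlinarith

lemma jF_ge (b : ℝ) (hb : 0 ≤ b) (a r : ℝ) (ha : 0 ≤ a) (hr : 0 ≤ r)
    (har : (1 + a) * r = Real.exp (a * b)) (K : ℕ) :
    ∀ y : ℝ, 0 ≤ y → 1 - jF b K y ≤ Real.exp (a * y) * r ^ K := by
  induction K with
  | zero =>
    intro y hy
    have h1 := Real.exp_pos (-y)
    have h2 : 1 ≤ Real.exp (a * y) := Real.one_le_exp (by positivity)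
    simp [jF, jA]; linarith
  | succ K ih =>
    intro y hy
    have hd : ∀ y, HasDerivAt (fun y => Real.exp ((1+a) * y) * r^(K+1))
        (Real.exp ((1+a)*y) * ((1+a) * 1) * r^(K+1)) y := fun y =>
      (((hasDerivAt_id y).const_mul (1+a)).exp).mul_const _
    have := mono_aux _ _ _ _ (fun y => (Real.hasDerivAt_exp y).sub (jF_deriv_s11 b K y)) hd
      (fun y hy => by
        have h1 := ih (y+b) (by positivity)
        have h2 := mul_le_mul_of_nonneg_left h1 (Real.exp_pos y).le
        have h3 : Real.exp ((1+a)*y) * ((1+a) * 1) * r^(K+1)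
            = Real.exp y * (Real.exp (a * (y+b)) * r^K) := by
          rw [show a * (y+b) = a*y + a*b by ring, Real.exp_add (a*y), ← har,
            show (1+a)*y = y + a*y by ring, Real.exp_add]
          ring
        rw [h3]; linarith)
      (by simp [jF_zero]; positivity) y hy
    have h4 : Real.exp ((1+a) * y) = Real.exp y * Real.exp (a*y) := by
      rw [← Real.exp_add]; congr 1; ring
    simp only [Pi.sub_apply, h4] at this
    have h5 : Real.exp y * (1 - jF b (K+1) y) ≤ Real.exp y * (Real.exp (a*y) * r^(K+1)) := by
      linarith
    exact le_of_mul_le_mul_left h5 (Real.exp_pos y)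

lemma jA_sum (b : ℝ) (hb : 0 ≤ b) (hb1 : b < 1) (y : ℝ) (hy : 0 < y) :
    HasSum (fun k => jA b k y) 1 := by
  rw [hasSum_iff_tendsto_nat_of_nonneg (fun k => jA_nonneg b hb k y hy.le),
    ← Filter.tendsto_add_atTop_iff_nat 1]
  have hpos : 0 < 1 + (1 - b) := by linarith
  set r := Real.exp ((1-b) * b) / (1 + (1-b)) with hr
  have hr0 : 0 ≤ r := by positivity
  have hr1 : r < 1 := by
    rw [hr, div_lt_one hpos]
    have h1 := Real.add_one_le_exp (-((1-b)*b))
    have h2 : Real.exp ((1-b)*b) * Real.exp (-((1-b)*b)) = 1 := by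
      rw [← Real.exp_add]; simp
    have h3 := Real.exp_pos ((1-b)*b)
    have h5 : 0 < 1 - b := by linarith
    have h4 : 1 < (1 + (1-b)) * (1 - (1-b)*b) := by nlinarith [pow_pos h5 3]
    have h6 : 0 < 1 - (1-b)*b := by nlinarith
    have h7 : Real.exp ((1-b)*b) * (1 - (1-b)*b) ≤ 1 := by nlinarith
    by_contra hc
    push Not at hc
    nlinarith
  have har : (1 + (1-b)) * r = Real.exp ((1-b)*b) := by rw [hr]; field_simp
  have hlim : Filter.Tendsto (fun K : ℕ => 1 - Real.exp ((1-b)*y) * r^K) Filter.atTop (nhds 1) := by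
    simpa using ((tendsto_pow_atTop_nhds_zero_of_lt_one hr0 hr1).const_mul
      (Real.exp ((1-b)*y))).const_sub 1
  refine tendsto_of_tendsto_of_tendsto_of_le_of_le hlim tendsto_const_nhds ?_ ?_
  · intro K
    have := jF_ge b hb (1-b) r (by linarith) hr0 har K y hy.le
    simp only [jF] at this
    simp only; linarith
  · intro K
    exact jF_le b hb K y hy.le

lemma lim_aux (b : ℝ) (hb : 0 ≤ b) (hb1 : b < 1) (C : ℝ) :
    Filter.Tendsto (fun r : ℕ => b^r * (C * ((r:ℝ)+1)^4)) Filter.atTop (nhds 0) := by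
  have h := fun k : ℕ => tendsto_pow_const_mul_const_pow_of_abs_lt_one k
    (show |b| < 1 by rw [abs_of_nonneg hb]; exact hb1)
  have h2 := (((((h 4).add ((h 3).const_mul 4)).add ((h 2).const_mul 6)).add
    ((h 1).const_mul 4)).add (h 0)).const_mul C
  simp only [mul_zero, add_zero] at h2
  refine h2.congr (fun r => ?_)
  ring

lemma jstep (b : ℝ) (hb : 0 ≤ b) (hb1 : b < 1) (m : ℕ) (R : ℕ → ℝ → ℝ) (s P : ℝ → ℝ) (C : ℝ)
    (hR : ∀ (j : ℕ) (z : ℝ), ((j:ℝ)+1)^m * (z + j * b) = b * (j:ℝ)^(m+1) + R j z)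
    (hRn : ∀ (j : ℕ) (z : ℝ), 0 < z → 0 ≤ R j z)
    (hs : ∀ z, 0 < z → HasSum (fun j => R j z * jA b j z) (z * s z))
    (hP : ∀ y, 0 < y → P y = b * P (y+b) + s (y+b))
    (hPn : ∀ y, 0 < y → 0 ≤ P y)
    (hC : ∀ y, 0 < y → P y ≤ C * (1+y)^4) :
    ∀ y, 0 < y → HasSum (fun k : ℕ => (k:ℝ)^(m+1) * jA b k y) (y * P y) := by
  have hrec : ∀ (j : ℕ) (y : ℝ), 0 < y → ((j+1:ℕ):ℝ)^(m+1) * jA b (j+1) y =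
      y/(y+b) * (b * ((j:ℝ)^(m+1) * jA b j (y+b)) + R j (y+b) * jA b j (y+b)) := by
    intro j y hy
    have h1 := jA_rec b hb j y hy
    have h2 := hR j (y+b)
    push_cast
    calc ((j:ℝ)+1)^(m+1) * jA b (j+1) y = ((j:ℝ)+1)^m * (((j:ℝ)+1) * jA b (j+1) y) := by ring
      _ = y/(y+b) * ((((j:ℝ)+1)^m * (y + b + j*b)) * jA b j (y+b)) := by rw [h1]; ring
      _ = _ := by rw [h2]; ring
  have hnn : ∀ y, 0 < y → ∀ k : ℕ, 0 ≤ (k:ℝ)^(m+1) * jA b k y := fun y hy k =>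
    mul_nonneg (by positivity) (jA_nonneg b hb k y hy.le)
  have hbd : ∀ K : ℕ, ∀ y, 0 < y → ∑ k ∈ Finset.range K, (k:ℝ)^(m+1) * jA b k y ≤ y * P y := by
    intro K
    induction K with
    | zero => intro y hy; simpa using mul_nonneg hy.le (hPn y hy)
    | succ K ih =>
      intro y hy
      have hz : 0 < y + b := by positivity
      rw [Finset.sum_range_succ', Finset.sum_congr rfl (fun j _ => hrec j y hy), ← Finset.mul_sum,
        Finset.sum_add_distrib, ← Finset.mul_sum]
      have h1 := ih (y+b) hz
      have h2 := sum_le_hasSum (Finset.range K)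
        (fun j _ => mul_nonneg (hRn j (y+b) hz) (jA_nonneg b hb j (y+b) hz.le)) (hs (y+b) hz)
      have h3 : y * P y = y/(y+b) * (b * ((y+b) * P (y+b)) + (y+b) * s (y+b)) := by
        rw [hP y hy]; field_simp
      rw [h3]
      simp only [Nat.cast_zero, ne_eq, Nat.succ_ne_zero, not_false_eq_true, zero_pow, zero_mul,
        add_zero]
      gcongr
  have hsum : ∀ y, 0 < y → Summable (fun k : ℕ => (k:ℝ)^(m+1) * jA b k y) := fun y hy =>
    summable_of_sum_range_le (hnn y hy) (fun K => hbd K y hy)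
  let D : ℝ → ℝ := fun y => P y - (∑' k : ℕ, (k:ℝ)^(m+1) * jA b k y) / y
  have hDn : ∀ y, 0 < y → 0 ≤ D y := by
    intro y hy
    have := Real.tsum_le_of_sum_range_le (hnn y hy) (fun K => hbd K y hy)
    simp only [D, sub_nonneg]
    rw [div_le_iff₀ hy]; linarith
  have hDle : ∀ y, 0 < y → D y ≤ P y := by
    intro y hy
    have : 0 ≤ (∑' k : ℕ, (k:ℝ)^(m+1) * jA b k y) / y := div_nonneg (tsum_nonneg (hnn y hy)) hy.le
    simp only [D]; linarith
  have hDrec : ∀ y, 0 < y → D y = b * D (y+b) := by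
    intro y hy
    have hz : 0 < y + b := by positivity
    simp only [D]
    rw [(hsum y hy).tsum_eq_zero_add]
    have h1 : ∑' j : ℕ, ((j+1:ℕ):ℝ)^(m+1) * jA b (j+1) y = y/(y+b) *
        (b * (∑' j : ℕ, (j:ℝ)^(m+1) * jA b j (y+b)) + (y+b) * s (y+b)) := by
      rw [tsum_congr (fun j => hrec j y hy)]
      exact ((((hsum (y+b) hz).hasSum.mul_left b).add (hs (y+b) hz)).mul_left _).tsum_eq
    rw [h1, hP y hy]
    simp only [Nat.cast_zero, ne_eq, Nat.succ_ne_zero, not_false_eq_true, zero_pow, zero_mul,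
        zero_add]
    field_simp
    ring
  have hDit : ∀ r : ℕ, ∀ y, 0 < y → D y = b^r * D (y + r*b) := by
    intro r
    induction r with
    | zero => intro y _; simp
    | succ r ih =>
      intro y hy
      rw [ih y hy, hDrec (y + r*b) (by positivity), pow_succ]
      push_cast
      rw [show y + ((r:ℝ)+1)*b = y + r*b + b by ring]
      ring
  have hC0 : 0 ≤ C := by
    have := (hPn 1 one_pos).trans (hC 1 one_pos)
    norm_num at this; linarith
  intro y hy
  have hD0 : D y ≤ 0 := by
    refine ge_of_tendsto' (lim_aux b hb hb1 (C * (1+y)^4)) (fun r => ?_)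
    rw [hDit r y hy]
    have hz : 0 < y + r*b := by positivity
    refine mul_le_mul_of_nonneg_left ?_ (by positivity)
    calc D (y + r*b) ≤ C * (1 + (y + r*b))^4 := (hDle _ hz).trans (hC _ hz)
      _ ≤ C * ((1+y) * ((r:ℝ)+1))^4 := by
        gcongr
        have : (r:ℝ) * b ≤ r := mul_le_of_le_one_right (by positivity) hb1.le
        nlinarith [mul_nonneg hy.le (Nat.cast_nonneg (α := ℝ) r)]
      _ = _ := by ring
  have hD1 : D y = 0 := le_antisymm hD0 (hDn y hy)
  have := (hsum y hy).hasSum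
  convert this using 1
  simp only [D] at hD1
  field_simp at hD1
  linarith

lemma pbound (c0 c1 c2 c3 c4 : ℝ) (h0 : 0 ≤ c0) (h1 : 0 ≤ c1) (h2 : 0 ≤ c2) (h3 : 0 ≤ c3)
    (h4 : 0 ≤ c4) (y : ℝ) (hy : 0 < y) :
    c0 + c1 * y + c2 * y^2 + c3 * y^3 + c4 * y^4 ≤ (c0+c1+c2+c3+c4) * (1+y)^4 := by
  have e0 : 1 ≤ (1+y)^4 := one_le_pow₀ (by linarith)
  have e1 : y ≤ (1+y)^4 := by nlinarith [pow_pos hy 2, pow_pos hy 3, pow_pos hy 4]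
  have e2 : y^2 ≤ (1+y)^4 := by nlinarith [pow_pos hy 2, pow_pos hy 3, pow_pos hy 4]
  have e3 : y^3 ≤ (1+y)^4 := by nlinarith [pow_pos hy 2, pow_pos hy 3, pow_pos hy 4]
  have e4 : y^4 ≤ (1+y)^4 := by nlinarith [pow_pos hy 2, pow_pos hy 3, pow_pos hy 4]
  nlinarith [mul_le_mul_of_nonneg_left e0 h0, mul_le_mul_of_nonneg_left e1 h1,
    mul_le_mul_of_nonneg_left e2 h2, mul_le_mul_of_nonneg_left e3 h3,
    mul_le_mul_of_nonneg_left e4 h4]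

lemma jmoment (b p : ℝ) (hb : 0 ≤ b) (hb1 : b < 1) (hp : p = 1 / (1 - b)) (y : ℝ) (hy : 0 < y) :
    HasSum (fun k : ℕ => (k:ℝ)^5 * jA b k y) (y * (
      (1 + 22 * b + 58 * b ^ 2 + 24 * b ^ 3) * p ^ 9 + 15 * (1 + 4 * b + 2 * b ^ 2) * p ^ 8 * y
        + 5 * (5 + 4 * b) * p^7 * y ^ 2 + 10 * p^6 * y ^ 3 + p^5 * y ^ 4)) := by
  have hpp : 0 < p := by rw [hp]; exact one_div_pos.2 (by linarith)
  have hbp : b = (p - 1)/p := by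
    have : 1 - b ≠ 0 := by linarith
    rw [hp]; field_simp; ring
  have s0 := jA_sum b hb hb1
  have s1 := jstep b hb hb1 0 (fun j z => z) (fun z => 1)
    (fun y => p + 0 * y + 0 * y^2 + 0 * y^3 + 0 * y^4) _
    (fun j z => by ring) (fun j z hz => by positivity)
    (fun z hz => (s0 z hz).mul_left z)
    (fun y hy => by rw [hbp]; field_simp; ring)
    (fun y hy => by positivity)
    (fun y hy => pbound _ _ _ _ _ (by positivity) (by positivity) (by positivity) (by positivity)
      (by positivity) y hy)
  have s2 := jstep b hb hb1 1 (fun j z => (z+b) * j + z) (fun z => (z+b) * p + 1)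
    (fun y => p^3 + p^2 * y + 0 * y^2 + 0 * y^3 + 0 * y^4) _
    (fun j z => by ring) (fun j z hz => by positivity)
    (fun z hz => by
      refine hs_cg (((s1 z hz).mul_left (z+b)).add ((s0 z hz).mul_left z)) (fun j => ?_) ?_
      · ring
      · ring)
    (fun y hy => by rw [hbp]; field_simp; ring)
    (fun y hy => by positivity)
    (fun y hy => pbound _ _ _ _ _ (by positivity) (by positivity) (by positivity) (by positivity)
      (by positivity) y hy)
  have s3 := jstep b hb hb1 2 (fun j z => (z+2*b) * j^2 + (2*z+b) * j + z)
    (fun z => (z+2*b) * (p^3+p^2*z) + (2*z+b) * p + 1)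
    (fun y => p^5*(1+2*b) + 3*p^4 * y + p^3 * y^2 + 0 * y^3 + 0 * y^4) _
    (fun j z => by ring) (fun j z hz => by positivity)
    (fun z hz => by
      refine hs_cg ((((s2 z hz).mul_left (z+2*b)).add ((s1 z hz).mul_left (2*z+b))).add
        ((s0 z hz).mul_left z)) (fun j => ?_) ?_
      · ring
      · ring)
    (fun y hy => by rw [hbp]; field_simp; ring)
    (fun y hy => by positivity)
    (fun y hy => pbound _ _ _ _ _ (by positivity) (by positivity) (by positivity) (by positivity)
      (by positivity) y hy)
  have s4 := jstep b hb hb1 3 (fun j z => (z+3*b) * j^3 + (3*z+3*b) * j^2 + (3*z+b) * j + z)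
    (fun z => (z+3*b) * (p^5*(1+2*b) + 3*p^4*z + p^3*z^2) + (3*z+3*b) * (p^3+p^2*z)
      + (3*z+b) * p + 1)
    (fun y => p^7*(1+8*b+6*b^2) + p^6*(7+8*b) * y + 6*p^5 * y^2 + p^4 * y^3 + 0 * y^4) _
    (fun j z => by ring) (fun j z hz => by positivity)
    (fun z hz => by
      refine hs_cg (((((s3 z hz).mul_left (z+3*b)).add ((s2 z hz).mul_left (3*z+3*b))).add
        ((s1 z hz).mul_left (3*z+b))).add ((s0 z hz).mul_left z)) (fun j => ?_) ?_
      · ring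
      · ring)
    (fun y hy => by rw [hbp]; field_simp; ring)
    (fun y hy => by positivity)
    (fun y hy => pbound _ _ _ _ _ (by positivity) (by positivity) (by positivity) (by positivity)
      (by positivity) y hy)
  exact jstep b hb hb1 4
    (fun j z => (z+4*b) * j^4 + (4*z+6*b) * j^3 + (6*z+4*b) * j^2 + (4*z+b) * j + z)
    (fun z => (z+4*b) * (p^7*(1+8*b+6*b^2) + p^6*(7+8*b) * z + 6*p^5 * z^2 + p^4 * z^3)
      + (4*z+6*b) * (p^5*(1+2*b) + 3*p^4*z + p^3*z^2) + (6*z+4*b) * (p^3+p^2*z)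
      + (4*z+b) * p + 1)
    (fun y => (1 + 22 * b + 58 * b ^ 2 + 24 * b ^ 3) * p ^ 9
        + 15 * (1 + 4 * b + 2 * b ^ 2) * p ^ 8 * y
        + 5 * (5 + 4 * b) * p^7 * y ^ 2 + 10 * p^6 * y ^ 3 + p^5 * y ^ 4) _
    (fun j z => by ring) (fun j z hz => by positivity)
    (fun z hz => by
      refine hs_cg ((((((s4 z hz).mul_left (z+4*b)).add ((s3 z hz).mul_left (4*z+6*b))).add
        ((s2 z hz).mul_left (6*z+4*b))).add
        ((s1 z hz).mul_left (4*z+b))).add ((s0 z hz).mul_left z)) (fun j => ?_) ?_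
      · ring
      · ring)
    (fun y hy => by rw [hbp]; field_simp; ring)
    (fun y hy => by positivity)
    (fun y hy => pbound _ _ _ _ _ (by positivity) (by positivity) (by positivity) (by positivity)
      (by positivity) y hy) y hy

lemma jainL_eq (n : ℕ) (b x : ℝ) (hb : 0 ≤ b) (h : 0 < n * x) (k : ℕ) :
    jainL n b x k = jA b k (n * x) := by
  cases k with
  | zero => 
    have h' := h.ne'
    simp only [jainL, jA, Nat.cast_zero, zero_mul, add_zero, pow_zero, Nat.factorial_zero,
      Nat.cast_one, div_one]
    rw [mul_one_div_cancel h', one_mul]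
  | succ k =>
    simp only [jainL, jA]
    have : (n * x + ((k+1:ℕ):ℝ) * b) ≠ 0 := by positivity
    rw [pow_succ, mul_div_cancel_right₀ _ this]
    push_cast
    rfl

theorem jain_fifth_moment (n : ℕ) (hn : 1 ≤ n) (x β : ℝ)
    (hx : 0 < x) (hβ0 : 0 ≤ β) (hβ1 : β < 1)
    (y p : ℝ) (hy : y = n * x) (hp : p = 1 / (1 - β)) :
    HasSum (fun k : ℕ => (k / n : ℝ) ^ 5 * jainL n β x k)
      (y * p ^ 5 / (n : ℝ) ^ 5 *
        (y ^ 4 + 10 * y ^ 3 * p + 5 * (5 + 4 * β) * y ^ 2 * p ^ 2 +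
          15 * (1 + 4 * β + 2 * β ^ 2) * y * p ^ 3 +
          (1 + 22 * β + 58 * β ^ 2 + 24 * β ^ 3) * p ^ 4)) := by
  have hn' : (0:ℝ) < n := by exact_mod_cast hn
  have hy0 : 0 < n * x := by positivity
  have h := (jmoment β p hβ0 hβ1 hp y (hy ▸ hy0)).mul_left (1 / (n:ℝ)^5)
  refine hs_cg (h) (fun k => ?_) ?_
  · 
    rw [jainL_eq n β x hβ0 hy0, ← hy]
    ring
  · ring
end

section
/- For n ≥ 1, x > 0, and 0 ≤ β < 1, setting y = nx and p = 1/(1-β), the central first moment satisfies ∑_{k=0}^∞ (k/n − x)·L_{n,k}^{(β)}(x) = xβ/(1-β). -/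
lemma jain_c_le (y : ℝ) (hy : 0 ≤ y) (k : ℕ) :
    (y + k) ^ k / (k.factorial : ℝ) ≤ Real.exp y * Real.exp 1 ^ k := by
  have h := Real.pow_div_factorial_le_exp (y + k) (by positivity) k
  rw [Real.exp_add] at h
  rwa [← Real.exp_nat_mul, mul_one]

lemma jain_summable (y : ℝ) (hy : 0 ≤ y) (z : ℝ) (hz : |z| * Real.exp 1 < 1) :
    Summable (fun k : ℕ => (y + k) ^ k / (k.factorial : ℝ) * z ^ k) := by
  have hg : Summable (fun k : ℕ => Real.exp y * (|z| * Real.exp 1) ^ k) :=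
    (summable_geometric_of_lt_one (by positivity) hz).mul_left _
  refine Summable.of_norm_bounded hg (fun k => ?_)
  rw [norm_mul, norm_pow, Real.norm_eq_abs, Real.norm_eq_abs, abs_of_nonneg (by positivity),
    mul_pow]
  calc _ ≤ (Real.exp y * Real.exp 1 ^ k) * |z| ^ k := by
        gcongr; exact jain_c_le y hy k
    _ = _ := by ring

lemma jain_small (b : ℝ) (hb : |b| < 1 / 10) : |b| * Real.exp |b| * Real.exp 1 < 1 := by
  have h1 : Real.exp |b| ≤ Real.exp 1 := Real.exp_le_exp.2 (by linarith)
  have h2 := Real.exp_one_lt_d9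
  have h3 := Real.exp_pos 1
  have h4 := Real.exp_pos |b|
  have h5 : Real.exp |b| * Real.exp 1 ≤ 2.72 * 2.72 := by
    apply mul_le_mul <;> linarith
  have := abs_nonneg b
  nlinarith

lemma jain_diff (y : ℝ) (m : ℕ) :
    ∑ k ∈ Finset.range (m + 1), (-1 : ℝ) ^ (m - k) * (m.choose k : ℝ) * (y + k) ^ m
      = m.factorial := by
  have h1 := fwdDiff_iter_eq_sum_shift (1 : ℝ) (fun x : ℝ => x ^ m) m y
  rw [fwdDiff_iter_eq_factorial] at h1
  simp only [zsmul_eq_mul, nsmul_eq_mul, mul_one] at h1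
  push_cast at h1
  simpa using h1.symm

lemma jain_local (y : ℝ) (hy : 0 ≤ y) (b : ℝ) (hb : |b| < 1 / 10) :
    ∑' k : ℕ, (y + k) ^ k / (k.factorial : ℝ) * (b * Real.exp (-b)) ^ k
      = Real.exp (y * b) / (1 - b) := by
  set f : ℕ × ℕ → ℝ := fun p => (y + p.1) ^ p.1 / (p.1.factorial : ℝ) * b ^ p.1 *
    ((-((y + p.1) * b)) ^ p.2 / (p.2.factorial : ℝ)) with hf
  have hexp : ∀ t : ℝ, HasSum (fun j : ℕ => t ^ j / (j.factorial : ℝ)) (Real.exp t) := by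
    intro t
    rw [Real.exp_eq_exp_ℝ]
    exact NormedSpace.expSeries_div_hasSum_exp t
  have hsum : Summable f := by
    apply Summable.of_norm
    rw [summable_prod_of_nonneg (fun _ => norm_nonneg _)]
    have hk : ∀ k : ℕ, HasSum (fun j => ‖f (k, j)‖)
        ((y + k) ^ k / (k.factorial : ℝ) * |b| ^ k * Real.exp ((y + k) * |b|)) := by
      intro k
      refine ((hexp ((y + k) * |b|)).mul_left _).congr_fun (fun j => ?_)
      have : |y + (k : ℝ)| = y + k := abs_of_nonneg (by positivity)
      simp [hf, this]
    refine ⟨fun k => (hk k).summable, ?_⟩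
    simp_rw [fun k => (hk k).tsum_eq]
    have := (jain_summable y hy (|b| * Real.exp |b|) (by
      rw [abs_of_nonneg (by positivity)]; exact jain_small b hb)).mul_left (Real.exp (y * |b|))
    refine this.congr (fun k => ?_)
    rw [add_mul, Real.exp_add, Real.exp_nat_mul, mul_pow]
    ring
  have h1 : HasSum (fun k : ℕ => (y + k) ^ k / (k.factorial : ℝ) * b ^ k *
      Real.exp (-((y + k) * b))) (∑' p, f p) :=
    hsum.hasSum.prod_fiberwise (fun k => (hexp _).mul_left _)
  have h2 : HasSum (fun m : ℕ => b ^ m) (∑' p, f p) := by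
    have h3 := (Finset.HasAntidiagonal.sigmaAntidiagonalEquivProd (A := ℕ)).hasSum_iff.2 hsum.hasSum
    refine h3.sigma (fun m => ?_)
    have h4 := hasSum_fintype (fun c : Finset.HasAntidiagonal.antidiagonal m => f c.1)
    convert h4 using 1
    · funext c; simp
    rw [Finset.sum_coe_sort (Finset.HasAntidiagonal.antidiagonal m) f,
      Finset.Nat.sum_antidiagonal_eq_sum_range_succ_mk]
    have hm : (m.factorial : ℝ) ≠ 0 := by positivity
    rw [eq_comm, ← mul_right_inj' hm, Finset.mul_sum, ← jain_diff y m, Finset.sum_mul]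
    refine Finset.sum_congr rfl (fun k hk => ?_)
    have hkm : k ≤ m := by simpa [Nat.lt_succ_iff] using hk
    rw [jain_diff]
    simp only [hf]
    rw [Nat.cast_choose ℝ hkm]
    obtain ⟨j, rfl⟩ := Nat.exists_eq_add_of_le hkm
    rw [Nat.add_sub_cancel_left, neg_eq_neg_one_mul, mul_pow, mul_pow, pow_add, pow_add]
    field_simp
  have hb1 : |b| < 1 := by linarith
  have h5 := h2.unique (hasSum_geometric_of_abs_lt_one hb1)
  rw [h5] at h1
  have h6 := h1.mul_left (Real.exp (y * b))
  rw [div_eq_mul_inv, ← h6.tsum_eq]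
  refine tsum_congr (fun k => ?_)
  rw [mul_pow, ← Real.exp_nat_mul]
  have : Real.exp (k * -b) = Real.exp (y * b) * Real.exp (-((y + k) * b)) := by
    rw [← Real.exp_add]; congr 1; ring
  rw [this]; ring

lemma jain_analytic (y : ℝ) (hy : 0 ≤ y) (z : ℝ) (hz : |z| * Real.exp 1 < 1) :
    AnalyticAt ℝ (fun z : ℝ => ∑' k : ℕ, (y + k) ^ k / (k.factorial : ℝ) * z ^ k) z := by
  set p := FormalMultilinearSeries.ofScalars ℝ
    (fun k : ℕ => (y + k) ^ k / (k.factorial : ℝ)) with hp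
  obtain ⟨r, hre⟩ : ∃ r : NNReal, (r : ℝ) = Real.exp (-1) :=
    ⟨(Real.exp (-1)).toNNReal, Real.coe_toNNReal _ (Real.exp_pos _).le⟩
  have hr : (r : ENNReal) ≤ p.radius := by
    apply FormalMultilinearSeries.le_radius_of_bound p (Real.exp y)
    intro k
    rw [hp, FormalMultilinearSeries.ofScalars_norm, Real.norm_eq_abs,
      abs_of_nonneg (by positivity), hre]
    calc _ ≤ (Real.exp y * Real.exp 1 ^ k) * Real.exp (-1) ^ k := by
          gcongr
          exact jain_c_le y hy k
      _ = Real.exp y := by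
          rw [mul_assoc, ← mul_pow, ← Real.exp_add]; simp
  have hz' : |z| < Real.exp (-1) := by
    rw [Real.exp_neg, ← one_div, lt_div_iff₀ (Real.exp_pos 1)]
    exact hz
  have h0 : 0 < p.radius := lt_of_lt_of_le (by
    rw [ENNReal.coe_pos, ← NNReal.coe_pos, hre]; exact Real.exp_pos (-1)) hr
  have h := (p.hasFPowerSeriesOnBall h0).analyticAt_of_mem (y := z) (by
    refine Metric.eball_subset_eball hr ?_
    rw [Metric.eball_coe]
    simpa [hre] using hz')
  have he : p.sum = fun z : ℝ => ∑' k : ℕ, (y + k) ^ k / (k.factorial : ℝ) * z ^ k := by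
    have := FormalMultilinearSeries.ofScalars_sum_eq (E := ℝ)
      (fun k : ℕ => (y + k) ^ k / (k.factorial : ℝ))
    funext w
    exact this w
  rwa [he] at h

lemma jain_dom (b : ℝ) (hb : b ∈ Set.Ioo (-1 / 10 : ℝ) 1) :
    |b * Real.exp (-b)| * Real.exp 1 < 1 := by
  rw [abs_mul, abs_of_pos (Real.exp_pos _)]
  rcases lt_or_ge b 0 with h | h
  · have h1 := jain_small b (by rw [abs_of_neg h]; linarith [hb.1])
    rwa [abs_of_neg h] at h1 ⊢
  · rw [abs_of_nonneg h, mul_assoc, ← Real.exp_add]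
    have h1 := Real.add_one_lt_exp (x := b - 1) (by linarith [hb.2])
    have h2 : Real.exp (-b + 1) * Real.exp (b - 1) = 1 := by
      rw [← Real.exp_add]; simp
    have := Real.exp_pos (-b + 1)
    nlinarith

lemma jain_global (y : ℝ) (hy : 0 ≤ y) (b : ℝ) (hb0 : 0 ≤ b) (hb1 : b < 1) :
    ∑' k : ℕ, (y + k) ^ k / (k.factorial : ℝ) * (b * Real.exp (-b)) ^ k
      = Real.exp (y * b) / (1 - b) := by
  have hf : AnalyticOnNhd ℝ (fun b : ℝ => ∑' k : ℕ, (y + k) ^ k / (k.factorial : ℝ) *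
      (b * Real.exp (-b)) ^ k) (Set.Ioo (-1 / 10 : ℝ) 1) := by
    intro c hc
    have h := jain_analytic y hy _ (jain_dom c hc)
    have h2 : AnalyticAt ℝ (fun b : ℝ => b * Real.exp (-b)) c := by fun_prop
    exact AnalyticAt.fun_comp (f := fun b : ℝ => b * Real.exp (-b)) h h2
  have hg : AnalyticOnNhd ℝ (fun b : ℝ => Real.exp (y * b) / (1 - b))
      (Set.Ioo (-1 / 10 : ℝ) 1) := by
    intro c hc
    have : (1 - c) ≠ 0 := by linarith [hc.2] |> fun (h : 0 < 1 - c) => h.ne'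
    exact AnalyticAt.div (by fun_prop) (by fun_prop) this
  have h := hf.eqOn_of_preconnected_of_eventuallyEq hg isPreconnected_Ioo (z₀ := 0)
    (by norm_num) (by
      have : Set.Ioo (-1 / 10 : ℝ) (1 / 10) ∈ nhds (0 : ℝ) :=
        Ioo_mem_nhds (by norm_num) (by norm_num)
      filter_upwards [this] with c hc
      exact jain_local y hy c (abs_lt.2 ⟨by linarith [hc.1], hc.2⟩))
  exact h ⟨by linarith, hb1⟩

lemma jain_H (y b : ℝ) (hy : 0 < y) (hb0 : 0 ≤ b) (hb1 : b < 1) :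
    HasSum (fun k : ℕ => (y + k * b) ^ k / (k.factorial : ℝ) * Real.exp (-(y + k * b)))
      (1 / (1 - b)) := by
  rcases hb0.eq_or_lt with rfl | hb
  · have h : HasSum (fun j : ℕ => y ^ j / (j.factorial : ℝ)) (Real.exp y) := by
      rw [Real.exp_eq_exp_ℝ]
      exact NormedSpace.expSeries_div_hasSum_exp y
    have h2 := h.mul_right (Real.exp (-y))
    rw [← Real.exp_add] at h2
    simpa using h2
  · have hs := (jain_summable (y / b) (by positivity) (b * Real.exp (-b))
      (jain_dom b ⟨by linarith, hb1⟩)).hasSum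
    rw [jain_global (y / b) (by positivity) b hb0 hb1, div_mul_cancel₀ _ hb.ne'] at hs
    have h2 := hs.mul_left (Real.exp (-y))
    have e : Real.exp (-y) * (Real.exp y / (1 - b)) = 1 / (1 - b) := by
      rw [← mul_div_assoc, ← Real.exp_add]; simp
    rw [e] at h2
    refine h2.congr_fun (fun k => ?_)
    have e1 : y + k * b = (y / b + k) * b := by field_simp
    have e2 : Real.exp (-(y + k * b)) = Real.exp (-y) * Real.exp (-b) ^ k := by
      rw [← Real.exp_nat_mul, ← Real.exp_add]; congr 1; ring
    rw [e2, e1, mul_pow, mul_pow]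
    ring

theorem jain_first_central_moment (n : ℕ) (hn : 1 ≤ n) (x β : ℝ)
    (hx : 0 < x) (hβ0 : 0 ≤ β) (hβ1 : β < 1) :
    HasSum (fun k : ℕ => ((k / n : ℝ) - x) * jainL n β x k) (x * β / (1 - β)) := by
  have hn' : (0 : ℝ) < n := by exact_mod_cast hn
  have hb : 1 - β ≠ 0 := by linarith [hβ1] |> fun (h : 0 < 1 - β) => h.ne'
  set y : ℝ := n * x with hydef
  have hy : 0 < y := by positivity
  have hH := jain_H y β hy hβ0 hβ1
  have hH' := (jain_H (y + β) β (by positivity) hβ0 hβ1).mul_left y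
  have hM : HasSum (fun k : ℕ => (k : ℝ) * jainL n β x k) (y * (1 / (1 - β))) := by
    rw [← hasSum_nat_add_iff' 1]
    simp only [Finset.range_one, Finset.sum_singleton, Nat.cast_zero, zero_mul, sub_zero]
    refine hH'.congr_fun (fun k => ?_)
    have e1 : y + ((k + 1 : ℕ) : ℝ) * β = y + β + k * β := by push_cast; ring
    have e2 : y + β + k * β ≠ 0 := by positivity
    simp only [jainL, ← hydef]
    rw [e1, Nat.factorial_succ, pow_succ]
    push_cast
    field_simp
  have hL : HasSum (fun k : ℕ => jainL n β x k) (1 / (1 - β) - β / y * (y * (1 / (1 - β)))) := by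
    refine (hH.sub (hM.mul_left (β / y))).congr_fun (fun k => ?_)
    have e2 : y + k * β ≠ 0 := by positivity
    simp only [jainL, ← hydef]
    field_simp
    ring
  have hF := (hM.mul_left (1 / (n : ℝ))).sub (hL.mul_left x)
  have e : x * β / (1 - β) = 1 / (n : ℝ) * (y * (1 / (1 - β))) -
      x * (1 / (1 - β) - β / y * (y * (1 / (1 - β)))) := by
    rw [hydef]; field_simp; ring
  rw [e]
  exact hF.congr_fun (fun k => by ring)
end

section
/- For n ≥ 1, x > 0, and 0 ≤ β < 1, the second central moment of the Jain operator satisfies ∑_{k=0}^∞ (k/n − x)²·L_{n,k}^{(β)}(x) = x²β²/(1-β)² + x/(n(1-β)³). -/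
open Filter Topology

noncomputable def jW (β : ℝ) : ℕ → ℝ → ℝ
  | 0, y => Real.exp (-y)
  | (k + 1), y => y * (y + ((k : ℝ) + 1) * β) ^ k / (Nat.factorial (k + 1)) *
      Real.exp (-(y + ((k : ℝ) + 1) * β))

lemma jW_nonneg {β : ℝ} (hβ : 0 ≤ β) (k : ℕ) {y : ℝ} (hy : 0 ≤ y) : 0 ≤ jW β k y := by
  cases k <;> simp only [jW] <;> positivity

lemma jW_deriv_zero (β y : ℝ) : HasDerivAt (jW β 0) (- jW β 0 y) y := by
  have h : HasDerivAt (fun y : ℝ => Real.exp (-y)) (Real.exp (-y) * (-1)) y :=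
    ((hasDerivAt_id y).neg).exp
  refine HasDerivAt.congr_deriv (f := jW β 0) h ?_
  simp only [jW]
  ring

lemma jW_deriv_succ (β y : ℝ) (k : ℕ) :
    HasDerivAt (jW β (k + 1)) (jW β k (y + β) - jW β (k + 1) y) y := by
  have h1 : HasDerivAt (fun y : ℝ => y + ((k : ℝ) + 1) * β) 1 y :=
    (hasDerivAt_id y).add_const _
  have h2 := (((hasDerivAt_id y).mul (h1.pow k)).div_const
    ((Nat.factorial (k + 1) : ℕ) : ℝ)).mul (h1.neg.exp)
  refine HasDerivAt.congr_deriv (f := jW β (k + 1)) h2 ?_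
  cases k with
  | zero => simp [jW]; ring_nf
  | succ k =>
    have hf : ((Nat.factorial (k + 1) : ℕ) : ℝ) ≠ 0 := by positivity
    have e : y + β + ((k : ℝ) + 1) * β = y + (((k + 1 : ℕ) : ℝ) + 1) * β := by
      push_cast; ring
    simp only [jW, e, Pi.pow_apply, Pi.mul_apply, Pi.neg_apply, id]
    rw [Nat.factorial_succ (k + 1)]
    push_cast
    field_simp
    ring

lemma jW_step (β : ℝ) (hβ : 0 ≤ β) (k : ℕ) {y : ℝ} (hy : 0 < y) :
    ((k : ℝ) + 1) * jW β (k + 1) y / y =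
      jW β k (y + β) + β * ((k : ℝ) * jW β k (y + β) / (y + β)) := by
  have hyb : y + β ≠ 0 := by positivity
  cases k with
  | zero => simp [jW]; field_simp
  | succ k =>
    have hf : ((Nat.factorial (k + 1) : ℕ) : ℝ) ≠ 0 := by positivity
    have e : y + β + ((k : ℝ) + 1) * β = y + (((k + 1 : ℕ) : ℝ) + 1) * β := by
      push_cast; ring
    simp only [jW, e]
    rw [Nat.factorial_succ (k + 1)]
    push_cast
    field_simp
    ring

lemma jW_zero (β : ℝ) (k : ℕ) : jW β k 0 = if k = 0 then 1 else 0 := by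
  cases k <;> simp [jW]

lemma jP_deriv (β y : ℝ) (N : ℕ) :
    HasDerivAt (fun y => ∑ k ∈ Finset.range (N + 1), jW β k y)
      (∑ k ∈ Finset.range N, jW β k (y + β) - ∑ k ∈ Finset.range (N + 1), jW β k y) y := by
  induction N with
  | zero => simpa using jW_deriv_zero β y
  | succ N ih =>
    simp_rw [Finset.sum_range_succ _ (N + 1)]
    refine (ih.add (jW_deriv_succ β y N)).congr_deriv ?_
    rw [Finset.sum_range_succ (fun k => jW β k (y + β)) N]
    ring

lemma jP_le (β : ℝ) (hβ : 0 ≤ β) (N : ℕ) :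
    ∀ y : ℝ, 0 ≤ y → ∑ k ∈ Finset.range N, jW β k y ≤ 1 := by
  induction N with
  | zero => intro y _; simp
  | succ N ih =>
    intro y hy
    have hd : ∀ z : ℝ, HasDerivAt
        (fun z => Real.exp z * (1 - ∑ k ∈ Finset.range (N + 1), jW β k z))
        (Real.exp z * (1 - ∑ k ∈ Finset.range N, jW β k (z + β))) z := by
      intro z
      refine ((Real.hasDerivAt_exp z).mul ((jP_deriv β z N).const_sub 1)).congr_deriv ?_
      ring
    have hm : MonotoneOn
        (fun z => Real.exp z * (1 - ∑ k ∈ Finset.range (N + 1), jW β k z)) (Set.Ici 0) := by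
      apply monotoneOn_of_deriv_nonneg (convex_Ici 0)
      · exact fun z _ => (hd z).continuousAt.continuousWithinAt
      · exact fun z _ => (hd z).differentiableAt.differentiableWithinAt
      · intro z hz
        rw [interior_Ici] at hz
        have hz' : (0 : ℝ) < z := hz
        rw [(hd z).deriv]
        have := ih (z + β) (by positivity)
        have := Real.exp_pos z
        apply mul_nonneg this.le
        linarith
    have h := hm (Set.mem_Ici.2 le_rfl) (Set.mem_Ici.2 hy) hy
    simp [jW_zero] at h
    have := Real.exp_pos y
    by_contra hc
    push Not at hc
    nlinarith

lemma jW_summable (β : ℝ) (hβ : 0 ≤ β) {y : ℝ} (hy : 0 ≤ y) :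
    Summable (fun k => jW β k y) :=
  summable_of_sum_range_le (fun k => jW_nonneg hβ k hy) (fun N => jP_le β hβ N y hy)

lemma jW_bound (β : ℝ) (hβ : 0 ≤ β) (k : ℕ) {y Y : ℝ} (hy : 0 ≤ y) (h : y ≤ Y) :
    jW β k y ≤ Real.exp Y * jW β k Y := by
  have hY : 0 ≤ Y := hy.trans h
  cases k with
  | zero =>
    simp only [jW]
    rw [← Real.exp_add]
    apply Real.exp_le_exp.2
    linarith
  | succ k =>
    simp only [jW]
    have e : Real.exp Y * (Y * (Y + ((k : ℝ) + 1) * β) ^ k / (Nat.factorial (k + 1)) *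
      Real.exp (-(Y + ((k : ℝ) + 1) * β))) = (Y * (Y + ((k : ℝ) + 1) * β) ^ k /
      (Nat.factorial (k + 1)) * Real.exp (-(((k : ℝ) + 1) * β))) := by
      rw [neg_add, Real.exp_add, Real.exp_neg Y]
      field_simp
    rw [e]
    gcongr
    linarith

lemma jS_cont (β : ℝ) (hβ : 0 ≤ β) (Y : ℝ) (hY : 0 ≤ Y) :
    ContinuousOn (fun y => ∑' k, jW β k y) (Set.Icc 0 Y) := by
  refine continuousOn_tsum (u := fun k => Real.exp Y * jW β k Y) ?_ ?_ ?_
  · intro k y _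
    cases k with
    | zero => exact (jW_deriv_zero β y).continuousAt.continuousWithinAt
    | succ k => exact (jW_deriv_succ β y k).continuousAt.continuousWithinAt
  · exact (jW_summable β hβ hY).mul_left _
  · intro k y hy
    rw [Real.norm_of_nonneg (jW_nonneg hβ k hy.1)]
    exact jW_bound β hβ k hy.1 hy.2

lemma jS_deriv (β : ℝ) (hβ : 0 ≤ β) (y : ℝ) (hy : 0 < y) :
    HasDerivAt (fun y => ∑' k, jW β k y) (∑' k, jW β k (y + β) - ∑' k, jW β k y) y := by
  set Y := y + 1 with hYd
  have hY : 0 ≤ Y := by positivity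
  have hYb : 0 ≤ Y + β := by positivity
  have key := hasDerivAt_tsum_of_isPreconnected (𝕜 := ℝ) (t := Set.Ioo 0 Y) (y₀ := y) (y := y)
    (g := fun k z => jW β (k + 1) z)
    (g' := fun k z => jW β k (z + β) - jW β (k + 1) z)
    (u := fun k => Real.exp (Y + β) * jW β k (Y + β) + Real.exp Y * jW β (k + 1) Y)
    (((jW_summable β hβ hYb).mul_left _).add
      (((summable_nat_add_iff 1).2 (jW_summable β hβ hY)).mul_left _))
    isOpen_Ioo isPreconnected_Ioo (fun k z _ => jW_deriv_succ β z k)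
    (by
      intro k z hz
      have h0 : 0 ≤ z + β := add_nonneg hz.1.le hβ
      have b1 := jW_bound β hβ k h0 (show z + β ≤ Y + β by linarith [hz.2])
      have b2 := jW_bound β hβ (k + 1) hz.1.le hz.2.le
      have n1 := jW_nonneg hβ k h0
      have n2 := jW_nonneg hβ (k + 1) hz.1.le
      rw [Real.norm_eq_abs, abs_le]
      constructor <;> linarith)
    ⟨hy, by linarith⟩ ((summable_nat_add_iff 1).2 (jW_summable β hβ hy.le)) ⟨hy, by linarith⟩
  have h := (jW_deriv_zero β y).add key
  have hyb : 0 ≤ y + β := by positivity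
  refine (h.congr_of_eventuallyEq ?_).congr_deriv ?_
  · filter_upwards [lt_mem_nhds hy] with z hz
    exact (jW_summable β hβ hz.le).tsum_eq_zero_add
  · rw [(jW_summable β hβ hyb).tsum_sub ((summable_nat_add_iff 1).2 (jW_summable β hβ hy.le)),
      (jW_summable β hβ hy.le).tsum_eq_zero_add]
    ring

lemma jS_eq (β : ℝ) (hβ : 0 ≤ β) (hβ1 : β < 1) (y : ℝ) (hy : 0 ≤ y) :
    ∑' k, jW β k y = 1 := by
  set S : ℝ → ℝ := fun y => ∑' k, jW β k y with hS
  have hS1 : ∀ z, 0 ≤ z → S z ≤ 1 := fun z hz =>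
    (jW_summable β hβ hz).tsum_le_of_sum_range_le (fun N => jP_le β hβ N z hz)
  have hS0 : ∀ z, 0 ≤ z → 0 ≤ S z := fun z hz => tsum_nonneg (fun k => jW_nonneg hβ k hz)
  have hSz : S 0 = 1 := by
    simp [hS, jW_zero]
  have main : ∀ ε : ℝ, 0 < ε → 1 - S y ≤ ε * y := by
    intro ε hε
    by_contra hc
    push Not at hc
    have hyY : y ≤ 1 / ε := by
      rw [le_div_iff₀ hε]; linarith [hS0 y hy]
    have hYp : 0 ≤ 1 / ε := by positivity
    have hcont : ContinuousOn (fun z => 1 - S z - ε * z) (Set.Icc 0 (1 / ε)) :=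
      (continuousOn_const.sub (jS_cont β hβ _ hYp)).sub (by fun_prop)
    obtain ⟨z, hz, hmax⟩ := isCompact_Icc.exists_isMaxOn ⟨y, hy, hyY⟩ hcont
    have hzy : 1 - S y - ε * y ≤ 1 - S z - ε * z := hmax ⟨hy, hyY⟩
    have hpos : 0 < 1 - S z - ε * z := by linarith
    have hz0 : 0 < z := by
      rcases hz.1.eq_or_lt with h | h
      · rw [← h, hSz] at hpos; simp at hpos
      · exact h
    have hall : ∀ t, 0 ≤ t → 1 - S t - ε * t ≤ 1 - S z - ε * z := by
      intro t ht
      rcases le_or_gt t (1 / ε) with h | h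
      · exact hmax ⟨ht, h⟩
      · rw [div_lt_iff₀ hε] at h
        linarith [hS0 t ht]
    have hloc : IsLocalMax (fun z => 1 - S z - ε * z) z := by
      filter_upwards [lt_mem_nhds hz0] with t ht using hall t ht.le
    have hd : HasDerivAt (fun z => 1 - S z - ε * z) (-(S (z + β) - S z) - ε * 1) z :=
      ((jS_deriv β hβ z hz0).const_sub 1).sub ((hasDerivAt_id z).const_mul ε)
    have h0 := hloc.hasDerivAt_eq_zero hd
    have h1 := hall (z + β) (by positivity)
    nlinarith
  have h2 : 1 - S y ≤ 0 := by
    apply le_of_forall_pos_le_add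
    intro δ hδ
    have h := main (δ / (y + 1)) (by positivity)
    have : δ / (y + 1) * y ≤ δ := by
      rw [div_mul_eq_mul_div, div_le_iff₀ (by positivity)]
      nlinarith
    linarith
  have h3 := hS1 y hy
  change S y = 1
  linarith

lemma jW_hasSum (β : ℝ) (hβ : 0 ≤ β) (hβ1 : β < 1) (y : ℝ) (hy : 0 ≤ y) :
    HasSum (fun k => jW β k y) 1 := by
  rw [← jS_eq β hβ hβ1 y hy]
  exact (jW_summable β hβ hy).hasSum

lemma rec_sum (β : ℝ) (hβ : 0 ≤ β) (hβ1 : β < 1) (a c : ℕ → ℝ → ℝ) (A C : ℝ → ℝ) (K : ℝ)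
    (ha : ∀ k y, 0 < y → 0 ≤ a k y) (hc : ∀ k y, 0 < y → 0 ≤ c k y)
    (h0 : ∀ y, 0 < y → a 0 y = 0)
    (hs : ∀ k y, 0 < y → a (k + 1) y = c k y + β * a k (y + β))
    (hC : ∀ y, 0 < y → HasSum (fun k => c k y) (C y))
    (hA : ∀ y, 0 < y → A y = C y + β * A (y + β))
    (hA0 : ∀ y, 0 < y → 0 ≤ A y) (hAK : ∀ y, 0 < y → A y ≤ K * (1 + y))
    (y : ℝ) (hy : 0 < y) : HasSum (fun k => a k y) (A y) := by
  have hP : ∀ N : ℕ, ∀ y, 0 < y → ∑ k ∈ Finset.range N, a k y ≤ A y := by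
    intro N
    induction N with
    | zero => intro y hy; simpa using hA0 y hy
    | succ N ih =>
      intro y hy
      rw [Finset.sum_range_succ', h0 y hy, Finset.sum_congr rfl (fun k _ => hs k y hy),
        Finset.sum_add_distrib, ← Finset.mul_sum, hA y hy]
      have h1 := ih (y + β) (by positivity)
      have h2 := sum_le_hasSum (Finset.range N) (fun k _ => hc k y hy) (hC y hy)
      have := mul_le_mul_of_nonneg_left h1 hβ
      linarith
  have hsum : ∀ y, 0 < y → Summable (fun k => a k y) := fun y hy =>
    summable_of_sum_range_le (fun k => ha k y hy) (fun N => hP N y hy)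
  set T : ℝ → ℝ := fun y => ∑' k, a k y with hT
  have hTrec : ∀ y, 0 < y → T y = C y + β * T (y + β) := by
    intro y hy
    have hyb : 0 < y + β := by positivity
    have h1 := (hC y hy).add ((hsum (y + β) hyb).hasSum.mul_left β)
    simp only [hT]
    rw [(hsum y hy).tsum_eq_zero_add, h0 y hy, zero_add]
    simp_rw [hs _ y hy]
    exact h1.tsum_eq
  have hTle : ∀ y, 0 < y → T y ≤ A y := fun y hy =>
    (hsum y hy).tsum_le_of_sum_range_le (fun N => hP N y hy)
  have hT0 : ∀ y, 0 < y → 0 ≤ T y := fun y hy => tsum_nonneg (fun k => ha k y hy)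
  have hit : ∀ N : ℕ, A y - T y = β ^ N * (A (y + N * β) - T (y + N * β)) := by
    intro N
    induction N with
    | zero => simp
    | succ N ih =>
      have hp : 0 < y + N * β := by positivity
      rw [ih, hA _ hp, hTrec _ hp]
      have e : y + ((N + 1 : ℕ) : ℝ) * β = y + N * β + β := by push_cast; ring
      rw [e]
      ring
  have hle : ∀ N : ℕ, A y - T y ≤ K * (1 + y) * β ^ N + K * β * (N * β ^ N) := by
    intro N
    have hp : 0 < y + N * β := by positivity
    rw [hit N]
    have h1 : A (y + N * β) - T (y + N * β) ≤ K * (1 + (y + N * β)) := by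
      linarith [hAK _ hp, hT0 _ hp]
    have := mul_le_mul_of_nonneg_left h1 (pow_nonneg hβ N)
    linarith
  have hlim : Tendsto (fun N : ℕ => K * (1 + y) * β ^ N + K * β * (N * β ^ N)) atTop (𝓝 0) := by
    have t1 := (tendsto_pow_atTop_nhds_zero_of_lt_one hβ hβ1).const_mul (K * (1 + y))
    have t2 := (tendsto_self_mul_const_pow_of_lt_one hβ hβ1).const_mul (K * β)
    simpa using t1.add t2
  have h4 : A y - T y ≤ 0 := ge_of_tendsto' hlim hle
  have h5 : A y = T y := by linarith [hTle y hy]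
  rw [h5]
  exact (hsum y hy).hasSum

lemma jM1 (β : ℝ) (hβ : 0 ≤ β) (hβ1 : β < 1) (y : ℝ) (hy : 0 < y) :
    HasSum (fun k : ℕ => (k : ℝ) * jW β k y / y) (1 / (1 - β)) := by
  have hb : 0 < 1 - β := by linarith
  refine rec_sum β hβ hβ1 (fun k y => (k : ℝ) * jW β k y / y) (fun k y => jW β k (y + β))
    (fun _ => 1 / (1 - β)) (fun _ => 1) (1 / (1 - β)) ?_ ?_ ?_ ?_ ?_ ?_ ?_ ?_ y hy
  · intro k y hy
    have := jW_nonneg hβ k hy.le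
    positivity
  · intro k y hy; exact jW_nonneg hβ k (by positivity)
  · intro y hy; simp
  · intro k y hy
    push_cast
    exact jW_step β hβ k hy
  · intro y hy; exact jW_hasSum β hβ hβ1 _ (by positivity)
  · intro y hy; field_simp; ring
  · intro y hy; positivity
  · intro y hy
    have : 0 < 1 / (1 - β) := by positivity
    nlinarith

lemma jM2 (β : ℝ) (hβ : 0 ≤ β) (hβ1 : β < 1) (y : ℝ) (hy : 0 < y) :
    HasSum (fun k : ℕ => (k : ℝ) ^ 2 * jW β k y / y)
      ((1 / (1 - β)) ^ 2 * (y + 1 / (1 - β))) := by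
  have hb : 0 < 1 - β := by linarith
  have hp : 0 < 1 / (1 - β) := by positivity
  refine rec_sum β hβ hβ1 (fun k y => (k : ℝ) ^ 2 * jW β k y / y)
    (fun k y => ((k : ℝ) + 1) * jW β k (y + β) + β * ((k : ℝ) * jW β k (y + β) / (y + β)))
    (fun y => (1 / (1 - β)) ^ 2 * (y + 1 / (1 - β)))
    (fun y => 1 + (y + β) * (1 / (1 - β)) + β * (1 / (1 - β)))
    ((1 / (1 - β)) ^ 2 * (1 + 1 / (1 - β))) ?_ ?_ ?_ ?_ ?_ ?_ ?_ ?_ y hy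
  · intro k y hy
    have := jW_nonneg hβ k hy.le
    positivity
  · intro k y hy
    have := jW_nonneg hβ k (show 0 ≤ y + β by positivity)
    positivity
  · intro y hy; simp
  · intro k y hy
    have h := jW_step β hβ k hy
    push_cast
    have e : ((k : ℝ) + 1) ^ 2 * jW β (k + 1) y / y
      = ((k : ℝ) + 1) * (((k : ℝ) + 1) * jW β (k + 1) y / y) := by ring
    rw [e, h]
    ring
  · intro y hy
    have hyb : 0 < y + β := by positivity
    have h1 := jM1 β hβ hβ1 (y + β) hyb
    have h2 := ((jW_hasSum β hβ hβ1 _ hyb.le).add (h1.mul_left (y + β))).add (h1.mul_left β)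
    refine h2.congr_fun ?_ 
    intro k
    field_simp
    ring
  · intro y hy; field_simp; ring
  · intro y hy; positivity
  · intro y hy
    rw [mul_assoc]
    apply mul_le_mul_of_nonneg_left _ (by positivity)
    nlinarith

lemma jainL_eq_s14 (n : ℕ) (hn : 1 ≤ n) (x β : ℝ) (hx : 0 < x) (hβ : 0 ≤ β) (k : ℕ) :
    jainL n β x k = jW β k (n * x) := by
  have hn' : (0 : ℝ) < n := by exact_mod_cast hn
  cases k with
  | zero => simp [jainL, jW]; field_simp
  | succ k =>
    have h : (n * x + ((k : ℝ) + 1) * β) ≠ 0 := by positivity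
    simp only [jainL, jW]
    push_cast
    rw [pow_succ, mul_div_assoc _ _ (n * x + ((k : ℝ) + 1) * β), div_self h, mul_one]

theorem jain_second_central_moment (n : ℕ) (hn : 1 ≤ n) (x β : ℝ)
    (hx : 0 < x) (hβ0 : 0 ≤ β) (hβ1 : β < 1) :
    HasSum (fun k : ℕ => ((k / n : ℝ) - x) ^ 2 * jainL n β x k)
      (x ^ 2 * β ^ 2 / (1 - β) ^ 2 + x / (n * (1 - β) ^ 3)) := by
  have hn' : (0 : ℝ) < n := by exact_mod_cast hn
  have hb : 0 < 1 - β := by linarith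
  have hy : 0 < n * x := by positivity
  have h0 := (jW_hasSum β hβ0 hβ1 _ hy.le).mul_left (x ^ 2)
  have h1 := (jM1 β hβ0 hβ1 _ hy).mul_left (-2 * x ^ 2)
  have h2 := (jM2 β hβ0 hβ1 _ hy).mul_left (x / n)
  have h := (h2.add h1).add h0
  have e : x ^ 2 * β ^ 2 / (1 - β) ^ 2 + x / (n * (1 - β) ^ 3) =
      x / n * ((1 / (1 - β)) ^ 2 * (n * x + 1 / (1 - β))) + -2 * x ^ 2 * (1 / (1 - β))
        + x ^ 2 * 1 := by
    field_simp
    ring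
  rw [e]
  refine h.congr_fun ?_ 
  intro k
  rw [jainL_eq_s14 n hn x β hx hβ0]
  field_simp
  ring
end

section
/- In the expansion S(r, α, β) = p^r·[α^{r-1} + ∑_{k=1}^{r-1} θ_k^r(β)·α^{r-k-1}·β^{k+1}·p^k] (with p = 1/(1-β)), the leading coefficient polynomial satisfies θ_1^r(β) = C(r,2) for all r ≥ 2; concretely, for r ≥ 2, 0 ≤ β < 1, and α > 0, the coefficient of α^{r-2} in (1-β)^r·S(r,α,β), viewed as a polynomial in α, equals C(r,2)·β²/(1-β). -/
/-- `S r α β = ∑_{k=0}^∞ (α+βk)^{k+r-1}/k! · e^{-(α+βk)}`, written with the exponent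
`k+r-1` as `(α+βk)^{k+r}/(α+βk)`. -/
noncomputable def jainS (r : ℕ) (α β : ℝ) : ℝ :=
  ∑' k : ℕ, (α + β * k) ^ (k + r) / (α + β * k) / (Nat.factorial k) * Real.exp (-(α + β * k))

lemma jcongr {f g : ℕ → ℝ} {a : ℝ} (h : ∀ k, f k = g k) (hg : HasSum g a) : HasSum f a := by
  rw [funext h]; exact hg

noncomputable def jT (β : ℝ) (s : ℕ) (α : ℝ) (k : ℕ) : ℝ :=
  (α + β * k) ^ (k + s) / (Nat.factorial k) * Real.exp (-(α + β * k))

noncomputable def jG_s17 (β : ℝ) (s : ℕ) (α : ℝ) : ℝ := ∑' k, jT β s α k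

lemma jT_nonneg (β : ℝ) (hβ0 : 0 ≤ β) (s : ℕ) (α : ℝ) (hα : 0 ≤ α) (k : ℕ) : 0 ≤ jT β s α k := by
  unfold jT; positivity

lemma jT_bound (β : ℝ) (hβ0 : 0 ≤ β) (hβ1 : β < 1) :
    ∃ η q : ℝ, 0 < η ∧ 0 ≤ q ∧ q < 1 ∧ β * Real.exp (η * β) < 1 ∧ ∀ s : ℕ, ∃ C : ℝ, 0 ≤ C ∧
      ∀ α : ℝ, 0 ≤ α → ∀ k : ℕ, jT β s α k ≤ C * Real.exp (η * α) * q ^ k := by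
  obtain ⟨η, hη⟩ : ∃ η, η = (1 - β) / 2 := ⟨_, rfl⟩
  obtain ⟨ε, hε⟩ : ∃ ε, ε = η * ((1 + β) / 2) := ⟨_, rfl⟩
  obtain ⟨δ, hδ⟩ : ∃ δ, δ = η * ((1 - β) / 2) := ⟨_, rfl⟩
  have hη0 : 0 < η := by rw [hη]; linarith
  have hε0 : 0 < ε := by rw [hε]; apply mul_pos hη0; linarith
  have hδ0 : 0 < δ := by rw [hδ]; apply mul_pos hη0; linarith
  have hx0 : 0 ≤ η * β := by positivity
  have hx1 : η * β < 1 := by rw [hη]; nlinarith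
  have hexp : Real.exp (η * β) * (1 - η * β) ≤ 1 := by
    have := Real.add_one_le_exp (-(η * β))
    have h2 : Real.exp (η * β) * Real.exp (-(η * β)) = 1 := by
      rw [← Real.exp_add]; simp
    nlinarith [Real.exp_pos (η * β)]
  have hq : Real.exp (η * β) < 1 + ε := by
    have h1 : 1 < (1 + ε) * (1 - η * β) := by
      have : (1 + ε) * (1 - η * β) - 1 = η * ((1 - β) / 2 * (1 - (1 + β) / 2 * β)) := by
        rw [hε, hη]; ring
      have h3 : 0 < η * ((1 - β) / 2 * (1 - (1 + β) / 2 * β)) := by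
        apply mul_pos hη0; apply mul_pos
        · linarith
        · nlinarith
      linarith
    have : Real.exp (η * β) * (1 - η * β) < (1 + ε) * (1 - η * β) := by linarith
    exact lt_of_mul_lt_mul_right this (by linarith)
  refine ⟨η, Real.exp (η * β) / (1 + ε), hη0, by positivity, ?_, ?_, ?_⟩
  · rw [div_lt_one (by positivity)]; exact hq
  · have h1 : β < 1 - η * β := by rw [hη]; nlinarith
    nlinarith [Real.exp_pos (η * β)]
  · intro s
    refine ⟨Nat.factorial s / δ ^ s, by positivity, ?_⟩
    intro α hα k
    obtain ⟨l, hl⟩ : ∃ l, l = α + β * k := ⟨_, rfl⟩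
    have hl0 : 0 ≤ l := by rw [hl]; positivity
    have h1 := Real.pow_div_factorial_le_exp (x := (1 + ε) * l) (by positivity) k
    have h2 := Real.pow_div_factorial_le_exp (x := δ * l) (by positivity) s
    have e1 : l ^ k / Nat.factorial k ≤ Real.exp ((1 + ε) * l) / (1 + ε) ^ k := by
      rw [le_div_iff₀ (by positivity)]
      calc _ = ((1 + ε) * l) ^ k / Nat.factorial k := by rw [mul_pow]; ring
        _ ≤ _ := h1
    have e2 : l ^ s ≤ Nat.factorial s / δ ^ s * Real.exp (δ * l) := by
      rw [mul_pow, div_le_iff₀ (by positivity)] at h2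
      rw [div_mul_eq_mul_div, le_div_iff₀ (by positivity)]
      linarith
    have e3 : jT β s α k = l ^ s * (l ^ k / Nat.factorial k) * Real.exp (-l) := by
      unfold jT; rw [← hl, pow_add]; ring
    rw [e3]
    calc _ ≤ (Nat.factorial s / δ ^ s * Real.exp (δ * l)) * (Real.exp ((1 + ε) * l) / (1 + ε) ^ k)
              * Real.exp (-l) := by gcongr
      _ = Nat.factorial s / δ ^ s * (Real.exp (δ * l) * Real.exp ((1 + ε) * l) * Real.exp (-l))
            / (1 + ε) ^ k := by ring
      _ = Nat.factorial s / δ ^ s * (Real.exp (η * α) * Real.exp (η * β) ^ k)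
            / (1 + ε) ^ k := by
          rw [← Real.exp_add, ← Real.exp_add, ← Real.exp_nat_mul, ← Real.exp_add]
          congr 3
          rw [hl, hδ, hε]; ring_nf
      _ = _ := by rw [div_pow]; ring

lemma jT_summable (β : ℝ) (hβ0 : 0 ≤ β) (hβ1 : β < 1) (s : ℕ) (α : ℝ) (hα : 0 ≤ α) :
    Summable (jT β s α) := by
  obtain ⟨η, q, hη, hq0, hq1, _, h⟩ := jT_bound β hβ0 hβ1
  obtain ⟨C, hC, h⟩ := h s
  exact Summable.of_nonneg_of_le (jT_nonneg β hβ0 s α hα) (h α hα)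
    ((summable_geometric_of_lt_one hq0 hq1).mul_left _)

lemma jG_bound (β : ℝ) (hβ0 : 0 ≤ β) (hβ1 : β < 1) :
    ∃ η : ℝ, 0 < η ∧ β * Real.exp (η * β) < 1 ∧ ∀ s : ℕ, ∃ C : ℝ, 0 ≤ C ∧
      ∀ α : ℝ, 0 ≤ α → |jG_s17 β s α| ≤ C * Real.exp (η * α) := by
  obtain ⟨η, q, hη, hq0, hq1, hb, h⟩ := jT_bound β hβ0 hβ1
  refine ⟨η, hη, hb, fun s => ?_⟩
  obtain ⟨C, hC, h⟩ := h s
  refine ⟨C * (1 - q)⁻¹, mul_nonneg hC (inv_nonneg.2 (by linarith)), fun α hα => ?_⟩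
  have h0 : 0 ≤ jG_s17 β s α := tsum_nonneg (jT_nonneg β hβ0 s α hα)
  rw [abs_of_nonneg h0]
  have := (jT_summable β hβ0 hβ1 s α hα).tsum_le_tsum (h α hα)
    ((summable_geometric_of_lt_one hq0 hq1).mul_left _)
  rw [tsum_mul_left, tsum_geometric_of_lt_one hq0 hq1] at this
  unfold jG_s17
  linarith

lemma jT_shift (β : ℝ) (s : ℕ) (α : ℝ) (k : ℕ) :
    ((k + 1 : ℕ) : ℝ) * ((α + β * ((k + 1 : ℕ) : ℝ)) ^ (k + s) / (Nat.factorial (k + 1))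
      * Real.exp (-(α + β * ((k + 1 : ℕ) : ℝ)))) = jT β s (α + β) k := by
  unfold jT
  rw [Nat.factorial_succ]
  have e : α + β * ((k + 1 : ℕ) : ℝ) = α + β + β * k := by push_cast; ring
  rw [e]
  have : ((k + 1 : ℕ) : ℝ) ≠ 0 := by positivity
  have : (Nat.factorial k : ℝ) ≠ 0 := by positivity
  rw [Nat.cast_mul]
  field_simp

lemma jG_rec (β : ℝ) (hβ0 : 0 ≤ β) (hβ1 : β < 1) (s : ℕ) (α : ℝ) (hα : 0 ≤ α) :
    jG_s17 β (s + 1) α = α * jG_s17 β s α + β * jG_s17 β (s + 1) (α + β) := by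
  have h1 := (jT_summable β hβ0 hβ1 s α hα).hasSum.mul_left α
  have h2 := (jT_summable β hβ0 hβ1 (s+1) (α + β) (by linarith)).hasSum.mul_left β
  have h3 : HasSum (fun k : ℕ => β * (k * jT β s α k))
      (β * jG_s17 β (s + 1) (α + β)) := by
    rw [← hasSum_nat_add_iff' 1]
    simp only [Finset.range_one, Finset.sum_singleton, Nat.cast_zero, zero_mul, mul_zero, sub_zero]
    refine jcongr (fun k => ?_) h2
    rw [← jT_shift]
    unfold jT
    rw [show k + 1 + s = k + (s + 1) by ring]
  have h4 := h1.add h3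
  refine Eq.trans ?_ h4.tsum_eq
  unfold jG_s17
  congr 1; ext k
  unfold jT
  rw [← add_assoc, pow_succ]; ring

lemma jG_zero (β : ℝ) (hβ0 : 0 ≤ β) (hβ1 : β < 1) :
    jG_s17 β 0 0 = 1 + β * jG_s17 β 0 β := by
  have h2 := (jT_summable β hβ0 hβ1 0 (0 + β) (by linarith)).hasSum.mul_left β
  have h3 : HasSum (jT β 0 0) (1 + β * jG_s17 β 0 (0 + β)) := by
    rw [← hasSum_nat_add_iff' 1]
    have : 1 + β * jG_s17 β 0 (0 + β) - ∑ i ∈ Finset.range 1, jT β 0 0 i = β * jG_s17 β 0 (0 + β) := by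
      simp [jT]
    rw [this]
    refine jcongr (fun k => ?_) h2
    rw [← jT_shift]
    unfold jT
    simp only [add_zero, zero_add, pow_succ]
    ring
  rw [zero_add] at h3
  exact h3.tsum_eq

noncomputable def jD (β : ℝ) (α : ℝ) (k : ℕ) : ℝ :=
  k * ((α + β * k) ^ (k - 1) / (Nat.factorial k) * Real.exp (-(α + β * k)))

lemma jT_deriv (β : ℝ) (α : ℝ) (k : ℕ) :
    HasDerivAt (fun x => jT β 0 x k) (jD β α k - jT β 0 α k) α := by
  unfold jT jD
  have h1 : HasDerivAt (fun x : ℝ => x + β * k) 1 α := (hasDerivAt_id α).add_const _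
  have h2 := ((h1.pow k).div_const (Nat.factorial k : ℝ)).mul (h1.neg.exp)
  refine HasDerivAt.congr_deriv h2 ?_
  simp only [Pi.neg_apply, Pi.pow_apply, add_zero]
  ring

lemma jD_hasSum (β : ℝ) (hβ0 : 0 ≤ β) (hβ1 : β < 1) (α : ℝ) (hα : 0 ≤ α) :
    HasSum (jD β α) (jG_s17 β 0 (α + β)) := by
  rw [← hasSum_nat_add_iff' 1]
  have : jG_s17 β 0 (α + β) - ∑ i ∈ Finset.range 1, jD β α i = jG_s17 β 0 (α + β) := by
    simp [jD]
  rw [this]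
  refine jcongr (fun k => ?_) (jT_summable β hβ0 hβ1 0 (α + β) (by linarith)).hasSum
  rw [← jT_shift]
  rfl

lemma jG_deriv (β : ℝ) (hβ0 : 0 ≤ β) (hβ1 : β < 1) (α : ℝ) (hα : 0 ≤ α) :
    HasDerivAt (jG_s17 β 0) (jG_s17 β 0 (α + β) - jG_s17 β 0 α) α := by
  obtain ⟨R, hR⟩ : ∃ R, R = α + 1 := ⟨_, rfl⟩
  have hR0 : 0 ≤ R := by linarith
  have hs1 := jT_summable β hβ0 hβ1 0 R hR0
  have hs2 := (jD_hasSum β hβ0 hβ1 R hR0).summable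
  have key : HasDerivAt (fun z => ∑' n, jT β 0 z n) (∑' n, (jD β α n - jT β 0 α n)) α := by
    refine hasDerivAt_tsum_of_isPreconnected (u := fun k => Real.exp (2 * R) * (jD β R k + jT β 0 R k))
      (g := fun n z => jT β 0 z n) (g' := fun n z => jD β z n - jT β 0 z n) (t := Set.Ioo (-R) R)
      (y₀ := α) ((hs2.add hs1).mul_left _) isOpen_Ioo isPreconnected_Ioo
      (fun n y _ => jT_deriv β y n) ?_ ⟨by linarith, by linarith⟩
      (jT_summable β hβ0 hβ1 0 α hα) ⟨by linarith, by linarith⟩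
    intro k y hy
    have hb : 0 ≤ β * k := by positivity
    have habs : |y + β * k| ≤ R + β * k := by
      rw [abs_le]; constructor <;> linarith [hy.1, hy.2]
    have hexp : Real.exp (-(y + β * k)) ≤ Real.exp (2 * R) * Real.exp (-(R + β * k)) := by
      rw [← Real.exp_add]; apply Real.exp_le_exp.2; linarith [hy.1]
    have h1 : |jD β y k| ≤ Real.exp (2 * R) * jD β R k := by
      unfold jD
      rw [abs_mul, abs_mul, abs_div, abs_pow, Real.abs_exp, Nat.abs_cast, Nat.abs_cast]
      calc _ ≤ (k:ℝ) * ((R + β * k) ^ (k - 1) / (Nat.factorial k)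
              * (Real.exp (2 * R) * Real.exp (-(R + β * k)))) := by gcongr
        _ = _ := by ring
    have h2 : |jT β 0 y k| ≤ Real.exp (2 * R) * jT β 0 R k := by
      unfold jT
      rw [abs_mul, abs_div, abs_pow, Real.abs_exp, Nat.abs_cast]
      calc _ ≤ ((R + β * k) ^ (k + 0) / (Nat.factorial k)
              * (Real.exp (2 * R) * Real.exp (-(R + β * k)))) := by gcongr
        _ = _ := by ring
    rw [Real.norm_eq_abs]
    calc _ ≤ |jD β y k| + |jT β 0 y k| := abs_sub _ _
      _ ≤ _ := by linarith
  rw [((jD_hasSum β hβ0 hβ1 α hα).sub (jT_summable β hβ0 hβ1 0 α hα).hasSum).tsum_eq] at key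
  exact key

/-- a function with `|h x| ≤ β |h ξ|`, `ξ ∈ [x, x+β]` and small growth vanishes -/
lemma jvanish (β η C : ℝ) (hβ0 : 0 ≤ β) (hη : 0 < η) (hb : β * Real.exp (η * β) < 1)
    (h : ℝ → ℝ) (hC : 0 ≤ C) (hg : ∀ x, 0 ≤ x → |h x| ≤ C * Real.exp (η * x))
    (hstep : ∀ x, 0 ≤ x → ∃ ξ, x ≤ ξ ∧ ξ ≤ x + β ∧ |h x| ≤ β * |h ξ|) (x : ℝ) (hx : 0 ≤ x) :
    h x = 0 := by
  have key : ∀ n : ℕ, ∀ x, 0 ≤ x → |h x| ≤ C * Real.exp (η * x) * (β * Real.exp (η * β)) ^ n := by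
    intro n
    induction n with
    | zero => intro x hx; simpa using hg x hx
    | succ n ih =>
      intro x hx
      obtain ⟨ξ, h1, h2, h3⟩ := hstep x hx
      have h4 := ih ξ (by linarith)
      have h5 : Real.exp (η * ξ) ≤ Real.exp (η * x) * Real.exp (η * β) := by
        rw [← Real.exp_add]; apply Real.exp_le_exp.2; nlinarith
      calc |h x| ≤ β * |h ξ| := h3
        _ ≤ β * (C * Real.exp (η * ξ) * (β * Real.exp (η * β)) ^ n) := by gcongr
        _ ≤ β * (C * (Real.exp (η * x) * Real.exp (η * β)) * (β * Real.exp (η * β)) ^ n) := by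
            gcongr
        _ = _ := by ring
  have ht : Filter.Tendsto (fun n : ℕ => C * Real.exp (η * x) * (β * Real.exp (η * β)) ^ n)
      Filter.atTop (nhds (C * Real.exp (η * x) * 0)) :=
    (tendsto_pow_atTop_nhds_zero_of_lt_one (by positivity) hb).const_mul _
  have := ge_of_tendsto' ht (fun n => key n x hx)
  rw [mul_zero] at this
  exact abs_eq_zero.1 (le_antisymm this (abs_nonneg _))

lemma jG_base (β : ℝ) (hβ0 : 0 ≤ β) (hβ1 : β < 1) (α : ℝ) (hα : 0 ≤ α) :
    jG_s17 β 0 α = 1 / (1 - β) := by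
  obtain ⟨η, hη, hb, hB⟩ := jG_bound β hβ0 hβ1
  obtain ⟨C, hC, hB⟩ := hB 0
  have hd : ∀ x, 0 ≤ x → jG_s17 β 0 (x + β) - jG_s17 β 0 x = 0 := by
    intro x hx
    refine jvanish β η (C * Real.exp (η * β) + C) hβ0 hη hb
      (fun x => jG_s17 β 0 (x + β) - jG_s17 β 0 x) (by positivity) ?_ ?_ x hx
    · intro x hx
      have h1 := hB x hx
      have h2 := hB (x + β) (by linarith)
      rw [mul_add, Real.exp_add] at h2
      calc _ ≤ |jG_s17 β 0 (x + β)| + |jG_s17 β 0 x| := abs_sub _ _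
        _ ≤ _ := by linarith
    · intro x hx
      rcases hβ0.eq_or_lt with h0 | h0
      · exact ⟨x, le_rfl, by linarith, by simp [← h0]⟩
      · obtain ⟨ξ, hξ, he⟩ := exists_hasDerivAt_eq_slope (jG_s17 β 0)
          (fun x => jG_s17 β 0 (x + β) - jG_s17 β 0 x) (show x < x + β by linarith)
          (fun y hy => (jG_deriv β hβ0 hβ1 y (by linarith [hy.1])).continuousAt.continuousWithinAt)
          (fun y hy => jG_deriv β hβ0 hβ1 y (by linarith [hy.1]))
        refine ⟨ξ, hξ.1.le, hξ.2.le, ?_⟩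
        have : jG_s17 β 0 (x + β) - jG_s17 β 0 x = β * (jG_s17 β 0 (ξ + β) - jG_s17 β 0 ξ) := by
          rw [he, add_sub_cancel_left]; field_simp
        show |jG_s17 β 0 (x + β) - jG_s17 β 0 x| ≤ _
        rw [this, abs_mul, abs_of_pos h0]
  have hconst : jG_s17 β 0 α = jG_s17 β 0 0 := by
    refine constant_of_has_deriv_right_zero (f := jG_s17 β 0) (a := 0) (b := α) ?_ ?_ α ⟨hα, le_rfl⟩
    · exact fun y hy => (jG_deriv β hβ0 hβ1 y hy.1).continuousAt.continuousWithinAt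
    · intro y hy
      have := jG_deriv β hβ0 hβ1 y hy.1
      rw [hd y hy.1] at this
      exact this.hasDerivWithinAt
  have h0 := hd 0 le_rfl
  rw [zero_add] at h0
  have h1 := jG_zero β hβ0 hβ1
  rw [hconst, eq_div_iff (by linarith)]
  have : jG_s17 β 0 β = jG_s17 β 0 0 := by linarith
  rw [this] at h1
  linarith

open Polynomial in
lemma jtaylor_top (β : ℝ) (Q : ℝ[X]) (n : ℕ) (hQ : Q.natDegree ≤ n) :
    (taylor β Q).coeff n = Q.coeff n := by
  rw [taylor_coeff]
  have h := natDegree_hasseDeriv_le Q n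
  rw [eval_eq_sum_range' (n := 1) (by omega)]
  simp [hasseDeriv_coeff]

open Polynomial in
lemma jtaylor_sub (β : ℝ) (Q : ℝ[X]) (n : ℕ) (hQ : Q.natDegree ≤ n + 1) :
    (taylor β Q).coeff n = Q.coeff n + (n + 1) * β * Q.coeff (n + 1) := by
  rw [taylor_coeff]
  have h := natDegree_hasseDeriv_le Q n
  rw [eval_eq_sum_range' (n := 2) (by omega)]
  simp [hasseDeriv_coeff, Finset.sum_range_succ, add_comm 1 n]
  ring

open Polynomial in
lemma jsolve (β : ℝ) (hβ1 : β < 1) (n : ℕ) : ∀ R : ℝ[X], R.natDegree ≤ n →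
    ∃ Q : ℝ[X], Q.natDegree ≤ n ∧ Q - C β * taylor β Q = R := by
  have hp : 1 - β ≠ 0 := by linarith
  induction n with
  | zero =>
    intro R hR
    obtain ⟨a, rfl⟩ := natDegree_eq_zero.1 (Nat.le_zero.1 hR)
    refine ⟨C (a / (1 - β)), by simp, ?_⟩
    rw [taylor_C, ← C_mul, ← C_sub]
    congr 1; field_simp
  | succ n ih =>
    intro R hR
    obtain ⟨Q0, hQ0⟩ : ∃ Q0 : ℝ[X], Q0 = C (R.coeff (n + 1) / (1 - β)) * X ^ (n + 1) := ⟨_, rfl⟩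
    have hd0 : Q0.natDegree ≤ n + 1 := by rw [hQ0]; exact natDegree_C_mul_X_pow_le _ _
    have hd1 : (C β * taylor β Q0).natDegree ≤ n + 1 :=
      (natDegree_C_mul_le _ _).trans (by rwa [natDegree_taylor])
    have hd2 : (R - (Q0 - C β * taylor β Q0)).natDegree ≤ n := by
      have h1 : (R - (Q0 - C β * taylor β Q0)).natDegree ≤ n + 1 :=
        by
        have h3 := natDegree_sub_le_of_le hd0 hd1
        have h4 := natDegree_sub_le_of_le hR h3
        simpa using h4
      have h2 : (R - (Q0 - C β * taylor β Q0)).coeff (n + 1) = 0 := by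
        rw [coeff_sub, coeff_sub, coeff_C_mul, jtaylor_top β Q0 _ hd0, hQ0]
        simp; field_simp; ring
      rw [natDegree_le_iff_coeff_eq_zero]
      intro m hm
      rcases (Nat.succ_le_of_lt hm).eq_or_lt with h | h
      · rw [← h]; exact h2
      · exact coeff_eq_zero_of_natDegree_lt (by omega)
    obtain ⟨Q1, h1, h2⟩ := ih _ hd2
    refine ⟨Q0 + Q1, natDegree_add_le_of_le hd0 (h1.trans (Nat.le_succ n)) |>.trans (by simp), ?_⟩
    rw [map_add]
    linear_combination h2

open Polynomial in
lemma jpoly (β : ℝ) (hβ0 : 0 ≤ β) (hβ1 : β < 1) (s : ℕ) :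
    ∃ Q : ℝ[X], Q.natDegree ≤ s ∧ Q.coeff s = (1 / (1 - β)) ^ (s + 1) ∧
      (∀ m, s = m + 1 → Q.coeff m = (Nat.choose (s + 1) 2 : ℝ) * β ^ 2 * (1 / (1 - β)) ^ (s + 2)) ∧
      ∀ α, 0 ≤ α → Q.eval α = jG_s17 β s α := by
  have hp : 1 - β ≠ 0 := by linarith
  induction s with
  | zero =>
    refine ⟨C (1 / (1 - β)), by simp, by simp, fun m hm => by omega, fun α hα => ?_⟩
    rw [jG_base β hβ0 hβ1 α hα, eval_C]
  | succ s ih =>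
    obtain ⟨Q, hd, hc, hb, hQ⟩ := ih
    obtain ⟨P, hPd, hP⟩ := jsolve β hβ1 (s + 1) (X * Q)
      (natDegree_mul_le.trans (by rw [natDegree_X]; omega))
    have htop : P.coeff (s + 1) = (1 / (1 - β)) ^ (s + 1 + 1) := by
      have := congrArg (fun p => coeff p (s + 1)) hP
      simp only [coeff_sub, coeff_C_mul, jtaylor_top β P _ hPd, coeff_X_mul, hc] at this
      rw [pow_succ, ← this]; field_simp
    refine ⟨P, hPd, htop, ?_, ?_⟩
    · intro m hm
      obtain rfl : m = s := by omega
      have := congrArg (fun p => coeff p m) hP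
      simp only [coeff_sub, coeff_C_mul, jtaylor_sub β P _ hPd, htop] at this
      have hx : (X * Q).coeff m = (Nat.choose (m + 1) 2 : ℝ) * β ^ 2 * (1 / (1 - β)) ^ (m + 2) := by
        cases m with
        | zero => simp
        | succ j => rw [coeff_X_mul]; exact hb j rfl
      rw [hx] at this
      have hch : (Nat.choose (m + 1 + 1) 2 : ℝ) = (m + 1) + Nat.choose (m + 1) 2 := by
        rw [Nat.choose_succ_succ' (m + 1) 1]; push_cast; simp
      have h3 : (1 - β) * P.coeff m = ((m + 1) + Nat.choose (m + 1) 2) * β ^ 2 * (1 / (1 - β)) ^ (m + 2) := by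
        linear_combination this
      rw [hch, show m + 1 + 2 = (m + 2) + 1 by ring, pow_succ (1 / (1 - β)), ← mul_assoc, ← h3]
      field_simp
    · intro α hα
      obtain ⟨η, hη, hbb, hB⟩ := jG_bound β hβ0 hβ1
      obtain ⟨C1, hC1, hB⟩ := hB (s + 1)
      -- growth of P
      have hgrow : ∀ p : ℝ[X], ∃ D, 0 ≤ D ∧ ∀ x, 0 ≤ x → |p.eval x| ≤ D * Real.exp (η * x) := by
        intro p
        induction p using Polynomial.induction_on' with
        | add p q h1 h2 =>
          obtain ⟨D1, h10, h1⟩ := h1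
          obtain ⟨D2, h20, h2⟩ := h2
          refine ⟨D1 + D2, by positivity, fun x hx => ?_⟩
          rw [eval_add]
          have := abs_add_le (p.eval x) (q.eval x)
          linarith [h1 x hx, h2 x hx]
        | monomial n a =>
          refine ⟨|a| * (Nat.factorial n / η ^ n), by positivity, fun x hx => ?_⟩
          have h2 := Real.pow_div_factorial_le_exp (x := η * x) (by positivity) n
          have e2 : x ^ n ≤ Nat.factorial n / η ^ n * Real.exp (η * x) := by
            rw [mul_pow, div_le_iff₀ (by positivity)] at h2
            rw [div_mul_eq_mul_div, le_div_iff₀ (by positivity)]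
            linarith
          rw [eval_monomial, abs_mul, abs_of_nonneg (pow_nonneg hx n), mul_assoc]
          gcongr
      obtain ⟨D, hD, hPg⟩ := hgrow P
      have := jvanish β η (D + C1) hβ0 hη hbb (fun x => P.eval x - jG_s17 β (s + 1) x) (by positivity)
        ?_ ?_ α hα
      · exact sub_eq_zero.1 this
      · intro x hx
        calc _ ≤ |P.eval x| + |jG_s17 β (s + 1) x| := abs_sub _ _
          _ ≤ _ := by linarith [hPg x hx, hB x hx]
      · intro x hx
        refine ⟨x + β, by linarith, le_rfl, ?_⟩
        have h1 := jG_rec β hβ0 hβ1 s x hx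
        have h2 := congrArg (eval x) hP
        simp only [eval_sub, eval_mul, eval_C, eval_X, taylor_eval, hQ x hx] at h2
        have h3 : P.eval x - jG_s17 β (s + 1) x = β * (P.eval (x + β) - jG_s17 β (s + 1) (x + β)) := by
          linear_combination h2 - h1
        show |P.eval x - jG_s17 β (s + 1) x| ≤ _
        rw [h3, abs_mul, abs_of_nonneg hβ0]

theorem jain_theta_one (r : ℕ) (hr : 2 ≤ r) (β : ℝ) (hβ0 : 0 ≤ β) (hβ1 : β < 1) :
    ∃ P : Polynomial ℝ, P.natDegree = r - 1 ∧
      (∀ α : ℝ, 0 < α → P.eval α = (1 - β) ^ r * jainS r α β) ∧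
      P.coeff (r - 2) = (Nat.choose r 2 : ℝ) * β ^ 2 / (1 - β) := by
  have hp : 1 - β ≠ 0 := by linarith
  obtain ⟨m, rfl⟩ : ∃ m, r = m + 2 := ⟨r - 2, by omega⟩
  obtain ⟨Q, hd, hc, hb, hQ⟩ := jpoly β hβ0 hβ1 (m + 1)
  refine ⟨Polynomial.C ((1 - β) ^ (m + 2)) * Q, ?_, ?_, ?_⟩
  · rw [Polynomial.natDegree_C_mul (pow_ne_zero _ hp)]
    refine le_antisymm hd (Polynomial.le_natDegree_of_ne_zero ?_)
    show Q.coeff (m + 1) ≠ 0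
    rw [hc]
    exact pow_ne_zero _ (one_div_ne_zero hp)
  · intro α hα
    rw [Polynomial.eval_mul, Polynomial.eval_C, hQ α hα.le]
    congr 1
    unfold jG_s17 jainS
    congr 1; ext k
    unfold jT
    have : α + β * k ≠ 0 := by positivity
    rw [show k + (m + 2) = k + (m + 1) + 1 by ring, pow_succ, mul_div_cancel_right₀ _ this]
  · show (Polynomial.C ((1 - β) ^ (m + 2)) * Q).coeff m = _
    rw [Polynomial.coeff_C_mul, hb m rfl]
    rw [show m + 1 + 2 = (m + 2) + 1 by ring, pow_succ (1 / (1 - β)), one_div_pow]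
    field_simp
end
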